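/- Let a > 0 with a ≠ 1, let n ≥ 2 be an integer, and let s > a/4. Then there exists a constant C > 0, independent of f, such that for every radial function f ∈ C_c^∞(ℝⁿ \ {0}) one has ‖S^a f‖_{L²(ℝⁿ, L^∞(B))} ≤ C ‖f‖_{H^s(ℝⁿ)}. -/

import Mathlib

open MeasureTheory Real
open scoped InnerProductSpace

noncomputable section

/-- The Fourier transform `f̂(ξ) = ∫ e^{-i x·ξ} f(x) dx` on `ℝⁿ`. -/
def FT (n : ℕ) (f : EuclideanSpace ℝ (Fin n) → ℂ) (ξ : EuclideanSpace ℝ (Fin n)) : ℂ :=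
  ∫ x, Complex.exp (-(Complex.I * ((⟪x, ξ⟫_ℝ : ℝ) : ℂ))) * f x

/-- The oscillatory integral `S^a f(x,t) = (2π)^{-n} ∫ e^{i(x·ξ + t|ξ|^a)} f̂(ξ) dξ`. -/
def Sosc (n : ℕ) (a : ℝ) (f : EuclideanSpace ℝ (Fin n) → ℂ)
    (x : EuclideanSpace ℝ (Fin n)) (t : ℝ) : ℂ :=
  (((2 * π) ^ n : ℝ) : ℂ)⁻¹ *
    ∫ ξ, Complex.exp (Complex.I * ((⟪x, ξ⟫_ℝ + t * ‖ξ‖ ^ a : ℝ) : ℂ)) * FT n f ξ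

open scoped ENNReal

/-- The polynomial weight `(x - 1/2)(3 - x)`, vanishing at the end points of `[1/2, 3]`. -/
def wt (x : ℝ) : ℝ := (x - 1/2) * (3 - x)

lemma hasDerivAt_wt (x : ℝ) : HasDerivAt wt (7/2 - 2 * x) x := by
  unfold wt
  convert! ((hasDerivAt_id x).sub_const (1/2)).mul ((hasDerivAt_id x).const_sub 3) using 1
  simp; ring

lemma hasDerivAt_wt' (x : ℝ) : HasDerivAt (fun y : ℝ => 7/2 - 2 * y) (-2) x := by
  simpa using ((hasDerivAt_id x).const_mul 2).const_sub (7/2)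

lemma abs_wt_le {x : ℝ} (hx : x ∈ Set.Icc (1/2 : ℝ) 3) : |wt x| ≤ 4 := by
  unfold wt
  rw [abs_le]
  obtain ⟨h1, h2⟩ := hx
  constructor <;> nlinarith

lemma abs_wt'_le {x : ℝ} (hx : x ∈ Set.Icc (1/2 : ℝ) 3) : |7/2 - 2 * x| ≤ 4 := by
  rw [abs_le]
  obtain ⟨h1, h2⟩ := hx
  constructor <;> linarith

lemma hasDerivAt_cexp_phase {φ : ℝ → ℝ} {p x : ℝ} (h : HasDerivAt φ p x) :
    HasDerivAt (fun y => Complex.exp (Complex.I * (φ y : ℂ)))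
      (Complex.exp (Complex.I * (φ x : ℂ)) * (Complex.I * (p : ℂ))) x :=
  (h.ofReal_comp.const_mul Complex.I).cexp

lemma norm_cexp_I_mul (y : ℝ) : ‖Complex.exp (Complex.I * (y : ℂ))‖ = 1 := by
  rw [mul_comm]; exact Complex.norm_exp_ofReal_mul_I y

/-- Second derivative test of van der Corput. -/
lemma vanDerCorput_second {φ p p1 : ℝ → ℝ} {lam : ℝ} (hlam : 0 < lam)
    (hφ : ∀ x ∈ Set.Icc (1/2 : ℝ) 3, HasDerivAt φ (p x) x)
    (hp : ∀ x ∈ Set.Icc (1/2 : ℝ) 3, HasDerivAt p (p1 x) x)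
    (hp1c : ContinuousOn p1 (Set.Icc (1/2 : ℝ) 3))
    (hp1 : ∀ x ∈ Set.Icc (1/2 : ℝ) 3, lam ≤ p1 x) :
    ‖∫ x in (1/2 : ℝ)..3, Complex.exp (Complex.I * (φ x : ℂ)) * (wt x : ℂ)‖
      ≤ 40 / √lam := by
  set e : ℝ → ℂ := fun x => Complex.exp (Complex.I * (φ x : ℂ)) with he
  have hI : Set.uIcc (1/2 : ℝ) 3 = Set.Icc (1/2 : ℝ) 3 := Set.uIcc_of_le (by norm_num)
  have hφc : ContinuousOn φ (Set.Icc (1/2 : ℝ) 3) := fun x hx => (hφ x hx).continuousAt.continuousWithinAt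
  have hpc : ContinuousOn p (Set.Icc (1/2 : ℝ) 3) := fun x hx => (hp x hx).continuousAt.continuousWithinAt
  have hwc : Continuous wt := by unfold wt; fun_prop
  have hec : ContinuousOn e (Set.Icc (1/2 : ℝ) 3) := by
    apply Complex.continuous_exp.comp_continuousOn
    exact continuousOn_const.mul (Complex.continuous_ofReal.comp_continuousOn hφc)
  have hd : ∀ x, 0 < p x ^ 2 + lam := fun x => by positivity
  set g : ℝ → ℝ := fun x => p x / (p x ^ 2 + lam) with hg
  set g1 : ℝ → ℝ := fun x => p1 x * (lam - p x ^ 2) / (p x ^ 2 + lam) ^ 2 with hg1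
  have hgd : ∀ x ∈ Set.Icc (1/2 : ℝ) 3, HasDerivAt g (g1 x) x := by
    intro x hx
    have h := (hp x hx).div (((hp x hx).pow 2).add_const lam) (hd x).ne'
    convert! h using 1
    simp only [hg1]
    push_cast
    simp only [Pi.pow_apply]
    ring
  have hgb : ∀ x, |g x| ≤ 1 / (2 * √lam) := by
    intro x
    simp only [hg]
    rw [abs_div, abs_of_pos (hd x), div_le_div_iff₀ (hd x) (by positivity)]
    have := sq_nonneg (|p x| - √lam)
    have h2 := Real.sq_sqrt hlam.le
    nlinarith [sq_abs (p x)]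
  have hg1c : ContinuousOn g1 (Set.Icc (1/2 : ℝ) 3) := by
    apply ContinuousOn.div
    · exact hp1c.mul (continuousOn_const.sub (hpc.pow 2))
    · exact ((hpc.pow 2).add continuousOn_const).pow 2
    · intro x hx; exact (pow_pos (hd x) 2).ne'
  have hgc : ContinuousOn g (Set.Icc (1/2 : ℝ) 3) := fun x hx => (hgd x hx).continuousAt.continuousWithinAt
  set U : ℝ → ℂ := fun x => e x * ((-Complex.I) * ((wt x * g x : ℝ) : ℂ)) with hU
  set R : ℝ → ℂ := fun x => e x * (((wt x * (lam / (p x ^ 2 + lam)) : ℝ) : ℂ)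
      + Complex.I * (((7/2 - 2 * x) * g x + wt x * g1 x : ℝ) : ℂ)) with hR
  have hRc : ContinuousOn R (Set.Icc (1/2 : ℝ) 3) := by
    apply hec.mul
    apply ContinuousOn.add
    · apply Complex.continuous_ofReal.comp_continuousOn
      apply hwc.continuousOn.mul
      exact continuousOn_const.div ((hpc.pow 2).add continuousOn_const) (fun x _ => (hd x).ne')
    · apply continuousOn_const.mul
      apply Complex.continuous_ofReal.comp_continuousOn
      exact ((by fun_prop : Continuous (fun x : ℝ => 7/2 - 2 * x)).continuousOn.mul hgc).add
        (hwc.continuousOn.mul hg1c)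
  have hUd : ∀ x ∈ Set.uIcc (1/2 : ℝ) 3, HasDerivAt U (e x * (wt x : ℂ) - R x) x := by
    intro x hx
    rw [hI] at hx
    have h1 := hasDerivAt_cexp_phase (hφ x hx)
    have h2 := ((((hasDerivAt_wt x).mul (hgd x hx)).ofReal_comp).const_mul (-Complex.I))
    convert! h1.mul h2 using 1
    simp only [hR, he]
    have h3 : lam / (p x ^ 2 + lam) = 1 - p x * g x := by
      simp only [hg]; have := (hd x).ne'; field_simp; ring
    rw [h3]
    simp only [Pi.mul_apply]
    push_cast
    ring_nf
    simp only [Complex.I_sq]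
    ring
  have hewc : ContinuousOn (fun x => e x * (wt x : ℂ)) (Set.Icc (1/2 : ℝ) 3) :=
    hec.mul (Complex.continuous_ofReal.comp_continuousOn hwc.continuousOn)
  have hi1 : IntervalIntegrable (fun x => e x * (wt x : ℂ)) volume (1/2) 3 := by
    apply ContinuousOn.intervalIntegrable; rwa [hI]
  have hi2 : IntervalIntegrable R volume (1/2) 3 := by
    apply ContinuousOn.intervalIntegrable; rwa [hI]
  have hftc := intervalIntegral.integral_eq_sub_of_hasDerivAt hUd (hi1.sub hi2)
  rw [intervalIntegral.integral_sub hi1 hi2] at hftc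
  have hU1 : U (1/2) = 0 := by simp [hU, wt]
  have hU3 : U 3 = 0 := by simp [hU, wt]
  rw [hU1, hU3, sub_zero, sub_eq_zero] at hftc
  rw [hftc]
  set mj : ℝ → ℝ := fun x => 8 * (p1 x / (p x ^ 2 + lam)) + 2 / √lam with hmj
  have hs : 0 < √lam := Real.sqrt_pos.2 hlam
  have hat : ∀ x ∈ Set.uIcc (1/2 : ℝ) 3,
      HasDerivAt (fun x => 8 * (Real.arctan (p x / √lam) / √lam) + 2 / √lam * x) (mj x) x := by
    intro x hx
    rw [hI] at hx
    have h := ((((hp x hx).div_const (√lam)).arctan).div_const (√lam)).const_mul 8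
    convert! h.add ((hasDerivAt_id x).const_mul (2 / √lam)) using 1
    simp only [hmj, mul_one]
    congr 2
    have := (hd x).ne'
    have h2 := Real.sq_sqrt hlam.le
    have h4 : 1 + (p x / √lam) ^ 2 = (p x ^ 2 + lam) / lam := by
      rw [div_pow, h2]; field_simp; ring
    rw [h4]
    have : p1 x / √lam / √lam = p1 x / lam := by rw [div_div, ← sq, h2]
    field_simp
    rw [h2]
  have hmjc : ContinuousOn mj (Set.Icc (1/2 : ℝ) 3) := by
    apply ContinuousOn.add _ continuousOn_const
    exact continuousOn_const.mul (hp1c.div ((hpc.pow 2).add continuousOn_const) (fun x _ => (hd x).ne'))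
  have hmji : IntervalIntegrable mj volume (1/2) 3 := by
    apply ContinuousOn.intervalIntegrable; rwa [hI]
  have hint := intervalIntegral.integral_eq_sub_of_hasDerivAt hat hmji
  have hbound : ‖∫ x in (1/2 : ℝ)..3, R x‖ ≤ ∫ x in (1/2 : ℝ)..3, mj x := by
    apply intervalIntegral.norm_integral_le_of_norm_le (by norm_num) _ hmji
    refine Filter.Eventually.of_forall (fun x hx => ?_)
    have hx : x ∈ Set.Icc (1/2 : ℝ) 3 := ⟨hx.1.le, hx.2⟩
    have hw := abs_wt_le hx
    have hw' := abs_wt'_le hx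
    have hp1x := hp1 x hx
    simp only [hR, norm_mul, he, norm_cexp_I_mul, one_mul]
    refine (norm_add_le _ _).trans ?_
    rw [norm_mul, Complex.norm_I, one_mul, Complex.norm_real, Complex.norm_real,
      Real.norm_eq_abs, Real.norm_eq_abs]
    have b1 : |wt x * (lam / (p x ^ 2 + lam))| ≤ 4 * (p1 x / (p x ^ 2 + lam)) := by
      rw [abs_mul]
      have : 0 < lam / (p x ^ 2 + lam) := div_pos hlam (hd x)
      rw [abs_of_pos this]
      gcongr

    have b2 : |(7/2 - 2 * x) * g x| ≤ 2 / √lam := by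
      rw [abs_mul]
      calc _ ≤ 4 * (1 / (2 * √lam)) := by gcongr; exact hgb x
        _ = 2 / √lam := by field_simp; norm_num
    have b3 : |wt x * g1 x| ≤ 4 * (p1 x / (p x ^ 2 + lam)) := by
      rw [abs_mul]
      gcongr
      simp only [hg1]
      rw [abs_div, abs_mul, abs_of_nonneg (hlam.le.trans hp1x), abs_of_pos (pow_pos (hd x) 2),
        div_le_div_iff₀ (pow_pos (hd x) 2) (hd x)]
      have : |lam - p x ^ 2| ≤ p x ^ 2 + lam := by
        rw [abs_le]; constructor <;> nlinarith [sq_nonneg (p x)]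
      have h5 := mul_le_mul_of_nonneg_left this (hlam.le.trans hp1x)
      nlinarith [hd x]
    have := abs_add_le ((7/2 - 2 * x) * g x) (wt x * g1 x)
    simp only [hmj]
    linarith
  refine hbound.trans ?_
  rw [hint]
  have hA : ∀ y, |Real.arctan y| ≤ 2 := fun y => by
    rw [abs_le]
    have := Real.arctan_lt_pi_div_two y
    have := Real.neg_pi_div_two_lt_arctan y
    have := Real.pi_lt_four
    constructor <;> linarith
  have h3 := hA (p 3 / √lam)
  have h1 := hA (p (1/2) / √lam)
  rw [abs_le] at h3 h1
  rw [le_div_iff₀ hs]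
  field_simp
  linarith

/-- Non-stationary phase: two integrations by parts. -/
lemma nonstationary_phase {φ p p1 p2 : ℝ → ℝ} {lam B : ℝ} (hlam : 0 < lam) (hB : 0 ≤ B)
    (hφ : ∀ x ∈ Set.Icc (1/2 : ℝ) 3, HasDerivAt φ (p x) x)
    (hp : ∀ x ∈ Set.Icc (1/2 : ℝ) 3, HasDerivAt p (p1 x) x)
    (hp1 : ∀ x ∈ Set.Icc (1/2 : ℝ) 3, HasDerivAt p1 (p2 x) x)
    (hp2c : ContinuousOn p2 (Set.Icc (1/2 : ℝ) 3))
    (hpb : ∀ x ∈ Set.Icc (1/2 : ℝ) 3, lam ≤ |p x|)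
    (hp1b : ∀ x ∈ Set.Icc (1/2 : ℝ) 3, |p1 x| ≤ B * |p x|)
    (hp2b : ∀ x ∈ Set.Icc (1/2 : ℝ) 3, |p2 x| ≤ B * |p x|) :
    ‖∫ x in (1/2 : ℝ)..3, Complex.exp (Complex.I * (φ x : ℂ)) * (wt x : ℂ)‖
      ≤ 40 * (1 + B) ^ 2 / lam ^ 2 := by
  set e : ℝ → ℂ := fun x => Complex.exp (Complex.I * (φ x : ℂ)) with he
  have hI : Set.uIcc (1/2 : ℝ) 3 = Set.Icc (1/2 : ℝ) 3 := Set.uIcc_of_le (by norm_num)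
  have hφc : ContinuousOn φ (Set.Icc (1/2 : ℝ) 3) :=
    fun x hx => (hφ x hx).continuousAt.continuousWithinAt
  have hpc : ContinuousOn p (Set.Icc (1/2 : ℝ) 3) :=
    fun x hx => (hp x hx).continuousAt.continuousWithinAt
  have hp1c : ContinuousOn p1 (Set.Icc (1/2 : ℝ) 3) :=
    fun x hx => (hp1 x hx).continuousAt.continuousWithinAt
  have hwc : Continuous wt := by unfold wt; fun_prop
  have hec : ContinuousOn e (Set.Icc (1/2 : ℝ) 3) := by
    apply Complex.continuous_exp.comp_continuousOn
    exact continuousOn_const.mul (Complex.continuous_ofReal.comp_continuousOn hφc)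
  have hp0 : ∀ x ∈ Set.Icc (1/2 : ℝ) 3, p x ≠ 0 := fun x hx =>
    abs_pos.1 (hlam.trans_le (hpb x hx))
  set a0 : ℝ → ℝ := fun x => wt x / p x with ha0
  set n0 : ℝ → ℝ := fun x => (7/2 - 2 * x) * p x - wt x * p1 x with hn0
  set a1 : ℝ → ℝ := fun x => n0 x / p x ^ 3 with ha1
  set a2 : ℝ → ℝ := fun x => (-2 * p x - wt x * p2 x) / p x ^ 3 - 3 * p1 x * n0 x / p x ^ 4 with ha2
  have ha0d : ∀ x ∈ Set.Icc (1/2 : ℝ) 3, HasDerivAt a0 (n0 x / p x ^ 2) x := by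
    intro x hx
    convert! (hasDerivAt_wt x).div (hp x hx) (hp0 x hx) using 1
  have hn0d : ∀ x ∈ Set.Icc (1/2 : ℝ) 3, HasDerivAt n0 (-2 * p x - wt x * p2 x) x := by
    intro x hx
    convert! ((hasDerivAt_wt' x).mul (hp x hx)).sub ((hasDerivAt_wt x).mul (hp1 x hx)) using 1
    ring
  have ha1d : ∀ x ∈ Set.Icc (1/2 : ℝ) 3, HasDerivAt a1 (a2 x) x := by
    intro x hx
    have h0 := hp0 x hx
    convert! (hn0d x hx).div ((hp x hx).pow 3) (pow_ne_zero 3 h0) using 1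
    simp only [ha2, Pi.pow_apply]
    push_cast
    field_simp
  have hn0b : ∀ x ∈ Set.Icc (1/2 : ℝ) 3, |n0 x| ≤ 4 * (1 + B) * |p x| := by
    intro x hx
    have h1 := abs_sub ((7/2 - 2 * x) * p x) (wt x * p1 x)
    rw [abs_mul, abs_mul] at h1
    have h2 : |7/2 - 2 * x| * |p x| ≤ 4 * |p x| := by gcongr; exact abs_wt'_le hx
    have h3 : |wt x| * |p1 x| ≤ 4 * (B * |p x|) :=
      mul_le_mul (abs_wt_le hx) (hp1b x hx) (abs_nonneg _) (by norm_num)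
    simp only [hn0]
    linarith
  have ha1b : ∀ x ∈ Set.Icc (1/2 : ℝ) 3, |a1 x| ≤ 4 * (1 + B) / lam ^ 2 := by
    intro x hx
    have hpx := hlam.trans_le (hpb x hx)
    simp only [ha1]
    rw [abs_div, abs_pow]
    calc |n0 x| / |p x| ^ 3 ≤ 4 * (1 + B) * |p x| / |p x| ^ 3 := by
          gcongr; exact hn0b x hx
      _ = 4 * (1 + B) / |p x| ^ 2 := by field_simp
      _ ≤ _ := by gcongr; exact hpb x hx
  have ha2b : ∀ x ∈ Set.Icc (1/2 : ℝ) 3,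
      |a2 x| ≤ (2 + 4 * B + 12 * B * (1 + B)) / lam ^ 2 := by
    intro x hx
    have hpx := hlam.trans_le (hpb x hx)
    have h1 : |-2 * p x - wt x * p2 x| ≤ (2 + 4 * B) * |p x| := by
      have h1 := abs_sub (-2 * p x) (wt x * p2 x)
      rw [abs_mul, abs_mul] at h1
      have h3 : |wt x| * |p2 x| ≤ 4 * (B * |p x|) :=
        mul_le_mul (abs_wt_le hx) (hp2b x hx) (abs_nonneg _) (by norm_num)
      have h4 : |(-2 : ℝ)| = 2 := by norm_num
      rw [h4] at h1
      linarith
    have h2 : |3 * p1 x * n0 x| ≤ 12 * B * (1 + B) * |p x| ^ 2 := by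
      rw [abs_mul, abs_mul]
      have h4 : |(3 : ℝ)| = 3 := by norm_num
      rw [h4]
      calc 3 * |p1 x| * |n0 x| ≤ 3 * (B * |p x|) * (4 * (1 + B) * |p x|) := by
            gcongr
            · exact hp1b x hx
            · exact hn0b x hx
        _ = _ := by ring
    calc |a2 x| ≤ |-2 * p x - wt x * p2 x| / |p x| ^ 3 + |3 * p1 x * n0 x| / |p x| ^ 4 := by
          simp only [ha2]
          refine (abs_sub _ _).trans ?_
          rw [abs_div, abs_div, abs_pow, abs_pow]
      _ ≤ (2 + 4 * B) * |p x| / |p x| ^ 3 + 12 * B * (1 + B) * |p x| ^ 2 / |p x| ^ 4 := by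
          gcongr
      _ = (2 + 4 * B + 12 * B * (1 + B)) / |p x| ^ 2 := by field_simp
      _ ≤ _ := by gcongr; exact hpb x hx
  have hn0c : ContinuousOn n0 (Set.Icc (1/2 : ℝ) 3) :=
    fun x hx => (hn0d x hx).continuousAt.continuousWithinAt
  have ha2c : ContinuousOn a2 (Set.Icc (1/2 : ℝ) 3) := by
    apply ContinuousOn.sub
    · exact ((continuousOn_const.mul hpc).sub (hwc.continuousOn.mul hp2c)).div (hpc.pow 3)
        (fun x hx => pow_ne_zero 3 (hp0 x hx))
    · exact ((continuousOn_const.mul hp1c).mul hn0c).div (hpc.pow 4)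
        (fun x hx => pow_ne_zero 4 (hp0 x hx))
  set U : ℝ → ℂ := fun x => e x * (-Complex.I * (a0 x : ℂ) + (a1 x : ℂ)) with hU
  have hUd : ∀ x ∈ Set.uIcc (1/2 : ℝ) 3,
      HasDerivAt U (e x * (wt x : ℂ) + e x * (a2 x : ℂ)) x := by
    intro x hx
    rw [hI] at hx
    have h1 := hasDerivAt_cexp_phase (hφ x hx)
    have h2 := (((ha0d x hx).ofReal_comp).const_mul (-Complex.I)).add (ha1d x hx).ofReal_comp
    convert! h1.mul h2 using 1
    have h0 : (p x : ℂ) ≠ 0 := by exact_mod_cast hp0 x hx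
    simp only [he, ha0, ha1, Pi.add_apply]
    push_cast
    field_simp
    ring_nf
    simp only [Complex.I_sq]
    ring
  have hi1 : IntervalIntegrable (fun x => e x * (wt x : ℂ)) volume (1/2) 3 := by
    apply ContinuousOn.intervalIntegrable; rw [hI]
    exact hec.mul (Complex.continuous_ofReal.comp_continuousOn hwc.continuousOn)
  have hi2 : IntervalIntegrable (fun x => e x * (a2 x : ℂ)) volume (1/2) 3 := by
    apply ContinuousOn.intervalIntegrable; rw [hI]
    exact hec.mul (Complex.continuous_ofReal.comp_continuousOn ha2c)
  have hftc := intervalIntegral.integral_eq_sub_of_hasDerivAt hUd (hi1.add hi2)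
  rw [intervalIntegral.integral_add hi1 hi2] at hftc
  have hUb : ∀ x ∈ Set.Icc (1/2 : ℝ) 3, wt x = 0 → ‖U x‖ ≤ 4 * (1 + B) / lam ^ 2 := by
    intro x hx h
    simp only [hU, he, norm_mul, norm_cexp_I_mul, ha0, h]
    simpa using ha1b x hx
  have hU1 := hUb (1/2) (by norm_num) (by simp [wt])
  have hU3 := hUb 3 (by norm_num) (by simp [wt])
  have hR : ‖∫ x in (1/2 : ℝ)..3, e x * (a2 x : ℂ)‖
      ≤ (2 + 4 * B + 12 * B * (1 + B)) / lam ^ 2 * |3 - 1/2| := by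
    apply intervalIntegral.norm_integral_le_of_norm_le_const
    intro x hx
    rw [Set.uIoc_of_le (by norm_num)] at hx
    simp only [norm_mul, he, norm_cexp_I_mul, one_mul, Complex.norm_real, Real.norm_eq_abs]
    exact ha2b x ⟨hx.1.le, hx.2⟩
  have heq : ∫ x in (1/2 : ℝ)..3, e x * (wt x : ℂ)
      = U 3 - U (1/2) - ∫ x in (1/2 : ℝ)..3, e x * (a2 x : ℂ) := by
    rw [← hftc]; ring
  rw [heq]
  have h52 : |(3 : ℝ) - 1/2| = 5/2 := by norm_num
  rw [h52] at hR
  calc _ ≤ ‖U 3‖ + ‖U (1/2)‖ + ‖∫ x in (1/2 : ℝ)..3, e x * (a2 x : ℂ)‖ :=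
        (norm_sub_le _ _).trans (by gcongr; exact norm_sub_le _ _)
    _ ≤ 4 * (1 + B) / lam ^ 2 + 4 * (1 + B) / lam ^ 2
        + (2 + 4 * B + 12 * B * (1 + B)) / lam ^ 2 * (5/2) := by gcongr
    _ = (13 + 48 * B + 30 * B ^ 2) / lam ^ 2 := by ring
    _ ≤ _ := by
      gcongr
      nlinarith

/-- The frequency-localized kernel at unit scale. -/
def kern (a y w : ℝ) : ℂ :=
  ∫ x in (1/2 : ℝ)..3, Complex.exp (Complex.I * ((y * x + w * x ^ a : ℝ) : ℂ)) * (wt x : ℂ)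

lemma norm_kern_le (a y w : ℝ) : ‖kern a y w‖ ≤ 10 := by
  have h : ‖kern a y w‖ ≤ 4 * |(3 : ℝ) - 1/2| := by
    apply intervalIntegral.norm_integral_le_of_norm_le_const
    intro x hx
    rw [Set.uIoc_of_le (by norm_num)] at hx
    rw [norm_mul, norm_cexp_I_mul, one_mul, Complex.norm_real, Real.norm_eq_abs]
    exact abs_wt_le ⟨hx.1.le, hx.2⟩
  refine h.trans (le_of_eq ?_)
  norm_num

lemma kern_neg (a y w : ℝ) : kern a (-y) (-w) = (starRingEnd ℂ) (kern a y w) := by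
  unfold kern
  rw [intervalIntegral.integral_of_le (by norm_num), intervalIntegral.integral_of_le (by norm_num),
    ← integral_conj]
  congr 1
  ext x
  rw [map_mul, ← Complex.exp_conj, map_mul, Complex.conj_I, Complex.conj_ofReal,
    Complex.conj_ofReal]
  congr 2
  push_cast
  ring

lemma hasDerivAt_phase (a y w : ℝ) {x : ℝ} (hx : x ∈ Set.Icc (1/2 : ℝ) 3) :
    HasDerivAt (fun x => y * x + w * x ^ a) (y + w * (a * x ^ (a - 1))) x := by
  have h0 : x ≠ 0 := by linarith [hx.1]
  convert! ((hasDerivAt_id x).const_mul y).add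
    ((Real.hasDerivAt_rpow_const (p := a) (Or.inl h0)).const_mul w) using 1
  simp

lemma kern_bound {a : ℝ} (ha : 0 < a) (ha1 : a ≠ 1) {ε : ℝ} (hε : 0 ≤ ε) (hε1 : ε ≤ 1) :
    ∃ C > 0, ∀ W ≥ (1 : ℝ), ∀ w, |w| ≤ 2 * W → ∀ y,
      ‖kern a y w‖ ≤ C * W ^ (1/2 + ε) * (1 + |y|) ^ (-(1 + ε)) := by
  have hder : ∀ b : ℝ, ∀ x ∈ Set.Icc (1/2 : ℝ) 3,
      HasDerivAt (fun x : ℝ => x ^ b) (b * x ^ (b - 1)) x := fun b x hx =>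
    Real.hasDerivAt_rpow_const (Or.inl (by linarith [hx.1]))
  have hcr : ∀ b : ℝ, ContinuousOn (fun x : ℝ => x ^ b) (Set.Icc (1/2 : ℝ) 3) := fun b x hx =>
    (hder b x hx).continuousAt.continuousWithinAt
  obtain ⟨L1, hL1⟩ := isCompact_Icc.exists_bound_of_continuousOn
    ((continuousOn_const (c := a)).mul (hcr (a - 1)))
  obtain ⟨L2, hL2⟩ := isCompact_Icc.exists_bound_of_continuousOn
    ((continuousOn_const (c := a * (a - 1))).mul (hcr (a - 2)))
  obtain ⟨L3, hL3⟩ := isCompact_Icc.exists_bound_of_continuousOn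
    ((continuousOn_const (c := a * (a - 1) * (a - 2))).mul (hcr (a - 3)))
  obtain ⟨x0, hx0, hmin⟩ := isCompact_Icc.exists_isMinOn
    (Set.nonempty_Icc.2 (by norm_num : (1/2 : ℝ) ≤ 3)) (hcr (a - 2))
  set c : ℝ := |a * (a - 1)| * x0 ^ (a - 2) with hc
  have haa : a * (a - 1) ≠ 0 := mul_ne_zero ha.ne' (sub_ne_zero.2 ha1)
  have hcpos : 0 < c := mul_pos (abs_pos.2 haa) (Real.rpow_pos_of_pos (by linarith [hx0.1]) _)
  set L : ℝ := max 1 (max L1 (max L2 L3)) with hL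
  have hLpos : 1 ≤ L := le_max_left _ _
  have hLL1 : L1 ≤ L := (le_max_left _ _).trans (le_max_right _ _)
  have hLL2 : L2 ≤ L :=
    ((le_max_left _ _).trans (le_max_right _ _)).trans (le_max_right _ _)
  have hLL3 : L3 ≤ L :=
    ((le_max_right _ _).trans (le_max_right _ _)).trans (le_max_right _ _)
  have hp : ∀ y w : ℝ, ∀ x ∈ Set.Icc (1/2 : ℝ) 3,
      HasDerivAt (fun x => y + w * (a * x ^ (a - 1))) (w * (a * (a - 1) * x ^ (a - 2))) x := by
    intro y w x hx
    have := ((((hder (a - 1) x hx).const_mul a).const_mul w).const_add y)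
    convert! this using 1
    rw [show a - 1 - 1 = a - 2 by ring]; ring
  have hp1 : ∀ w : ℝ, ∀ x ∈ Set.Icc (1/2 : ℝ) 3,
      HasDerivAt (fun x => w * (a * (a - 1) * x ^ (a - 2)))
        (w * (a * (a - 1) * (a - 2) * x ^ (a - 3))) x := by
    intro w x hx
    have := (((hder (a - 2) x hx).const_mul (a * (a - 1))).const_mul w)
    convert! this using 1
    rw [show a - 2 - 1 = a - 3 by ring]; ring
  have hp2c : ∀ w : ℝ, ContinuousOn (fun x => w * (a * (a - 1) * (a - 2) * x ^ (a - 3)))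
      (Set.Icc (1/2 : ℝ) 3) := fun w => continuousOn_const.mul (continuousOn_const.mul (hcr _))
  have hp1c : ∀ w : ℝ, ContinuousOn (fun x => w * (a * (a - 1) * x ^ (a - 2)))
      (Set.Icc (1/2 : ℝ) 3) := fun w => continuousOn_const.mul (continuousOn_const.mul (hcr _))
  have hvdc1 : ∀ y w : ℝ, 0 < w * (a * (a - 1)) → ‖kern a y w‖ ≤ 40 / √(c * |w|) := by
    intro y w hw
    have hw0 : w ≠ 0 := by rintro rfl; simp at hw
    refine vanDerCorput_second (mul_pos hcpos (abs_pos.2 hw0)) (fun x hx => hasDerivAt_phase a y w hx)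
      (hp y w) (hp1c w) ?_
    intro x hx
    have h1 : x0 ^ (a - 2) ≤ x ^ (a - 2) := hmin hx
    have h2 : c * |w| = (w * (a * (a - 1))) * x0 ^ (a - 2) := by
      rw [← abs_of_pos hw, abs_mul, hc]; ring
    rw [h2]
    calc _ ≤ (w * (a * (a - 1))) * x ^ (a - 2) := by gcongr
      _ = _ := by ring
  have hvdc : ∀ y w : ℝ, w ≠ 0 → ‖kern a y w‖ ≤ 40 / √(c * |w|) := by
    intro y w hw
    rcases lt_or_gt_of_ne (mul_ne_zero hw haa) with h | h
    · have := hvdc1 (-y) (-w) (by linarith)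
      rwa [kern_neg, RCLike.norm_conj, abs_neg] at this
    · exact hvdc1 y w h
  have hns : ∀ y w : ℝ, y ≠ 0 → 2 * L * |w| ≤ |y| → ‖kern a y w‖ ≤ 640 / y ^ 2 := by
    intro y w hy hyw
    have hy0 := abs_pos.2 hy
    have hwx : ∀ z, |z| ≤ L → |w * z| ≤ |y| / 2 := by
      intro z hz
      rw [abs_mul]
      have := mul_le_mul_of_nonneg_left hz (abs_nonneg w)
      linarith
    have hlow : ∀ x ∈ Set.Icc (1/2 : ℝ) 3, |y| / 2 ≤ |y + w * (a * x ^ (a - 1))| := by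
      intro x hx
      have h1 : |w * (a * x ^ (a - 1))| ≤ |y| / 2 := hwx _ ((hL1 x hx).trans hLL1)
      have h2 := abs_sub_abs_le_abs_sub y (-(w * (a * x ^ (a - 1))))
      rw [sub_neg_eq_add, abs_neg] at h2
      linarith
    have := nonstationary_phase (lam := |y| / 2) (B := 1) (by positivity) zero_le_one
      (fun x hx => hasDerivAt_phase a y w hx) (hp y w) (hp1 w) (hp2c w) hlow
      (fun x hx => by
        rw [one_mul]; exact (hwx _ ((hL2 x hx).trans hLL2)).trans (hlow x hx))
      (fun x hx => by
        rw [one_mul]; exact (hwx _ ((hL3 x hx).trans hLL3)).trans (hlow x hx))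
    refine this.trans (le_of_eq ?_)
    rw [div_pow, sq_abs]
    field_simp
    norm_num
  set C3 : ℝ := 40 * √(4 * L / c) * (1 + 4 * L) ^ (1/2 + ε) with hC3
  have hC3p : 0 ≤ C3 := by positivity
  refine ⟨2560 + C3, by positivity, ?_⟩
  intro W hW w hw y
  have hWp : (1 : ℝ) ≤ W ^ (1/2 + ε) := Real.one_le_rpow hW (by linarith)
  have hy1 : 1 ≤ 1 + |y| := by linarith [abs_nonneg y]
  have hzp : 0 < (1 + |y|) ^ (-(1 + ε)) := Real.rpow_pos_of_pos (by linarith) _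
  have hz2 : (1 + |y|) ^ (-2 : ℝ) ≤ (1 + |y|) ^ (-(1 + ε)) :=
    Real.rpow_le_rpow_of_exponent_le hy1 (by linarith)
  have hz2' : (1 + |y|) ^ (-2 : ℝ) = 1 / (1 + |y|) ^ 2 := by
    rw [Real.rpow_neg (by linarith), one_div]; norm_cast
  have key : ∀ K, ‖kern a y w‖ ≤ K * (1 / (1 + |y|) ^ 2) → K ≤ 2560 → 0 ≤ K →
      ‖kern a y w‖ ≤ (2560 + C3) * W ^ (1/2 + ε) * (1 + |y|) ^ (-(1 + ε)) := by
    intro K h1 h2 h3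
    rw [hz2'] at hz2
    calc _ ≤ K * (1 / (1 + |y|) ^ 2) := h1
      _ ≤ (2560 + C3) * (1 + |y|) ^ (-(1 + ε)) := by gcongr; linarith
      _ = (2560 + C3) * 1 * (1 + |y|) ^ (-(1 + ε)) := by ring
      _ ≤ _ := by gcongr
  by_cases hys : |y| ≤ 1
  · apply key 40 _ (by norm_num) (by norm_num)
    refine (norm_kern_le a y w).trans ?_
    rw [mul_one_div, le_div_iff₀ (by positivity)]
    nlinarith [abs_nonneg y]
  push Not at hys
  have hy0 : y ≠ 0 := by rintro rfl; simp at hys; linarith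
  by_cases hyw : 2 * L * |w| ≤ |y|
  · apply key 2560 _ le_rfl (by norm_num)
    refine (hns y w hy0 hyw).trans ?_
    rw [mul_one_div, ← sq_abs y, div_le_div_iff₀ (by positivity) (by positivity)]
    nlinarith [abs_nonneg y]
  push Not at hyw
  have hw0 : w ≠ 0 := by rintro rfl; simp at hyw; linarith
  have h1 := hvdc y w hw0
  have h2 : c / (4 * L) * (1 + |y|) ≤ c * |w| := by
    rw [div_mul_eq_mul_div, div_le_iff₀ (by positivity)]
    nlinarith
  have h3 : ‖kern a y w‖ ≤ 40 * √(4 * L / c) * (1 + |y|) ^ (-(1/2) : ℝ) := by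
    refine h1.trans ?_
    calc 40 / √(c * |w|) ≤ 40 / √(c / (4 * L) * (1 + |y|)) := by gcongr
      _ = _ := by
        rw [Real.sqrt_mul (by positivity), Real.rpow_neg (by linarith), ← Real.sqrt_eq_rpow,
          ← inv_div (4 * L) c, Real.sqrt_inv]
        have : 0 < √(4 * L / c) := by positivity
        field_simp
  have h4 : 1 + |y| ≤ (1 + 4 * L) * W := by nlinarith
  calc _ ≤ 40 * √(4 * L / c) * (1 + |y|) ^ (-(1/2) : ℝ) := h3
    _ = 40 * √(4 * L / c) * ((1 + |y|) ^ (1/2 + ε) * (1 + |y|) ^ (-(1 + ε))) := by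
      rw [← Real.rpow_add (by linarith)]; congr 2; ring
    _ ≤ 40 * √(4 * L / c) * (((1 + 4 * L) * W) ^ (1/2 + ε) * (1 + |y|) ^ (-(1 + ε))) := by
      gcongr
    _ = C3 * W ^ (1/2 + ε) * (1 + |y|) ^ (-(1 + ε)) := by
      rw [Real.mul_rpow (by linarith) (by linarith), hC3]; ring
    _ ≤ _ := by gcongr; linarith

/-- Selberg's inequality for almost orthogonal families. -/
lemma selberg_inequality {E ι : Type*} [NormedAddCommGroup E] [InnerProductSpace ℂ E]
    (J : Finset ι) (g : ι → E) (f : E) {A : ℝ} (hA0 : 0 ≤ A)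
    (hA : ∀ j ∈ J, ∑ k ∈ J, ‖⟪g j, g k⟫_ℂ‖ ≤ A) :
    ∑ j ∈ J, ‖⟪g j, f⟫_ℂ‖ ^ 2 ≤ A * ‖f‖ ^ 2 := by
  set c : ι → ℂ := fun j => ⟪g j, f⟫_ℂ with hc
  set S : ℝ := ∑ j ∈ J, ‖c j‖ ^ 2 with hS
  have hS0 : 0 ≤ S := Finset.sum_nonneg fun _ _ => by positivity
  set v : E := ∑ j ∈ J, c j • g j with hv
  have h1 : ⟪v, f⟫_ℂ = (S : ℂ) := by
    rw [hv, sum_inner, hS]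
    push_cast
    refine Finset.sum_congr rfl fun j _ => ?_
    rw [inner_smul_left]
    change (starRingEnd ℂ) (c j) * c j = _
    rw [← Complex.normSq_eq_conj_mul_self, Complex.normSq_eq_norm_sq]
    norm_cast
  have h2 : S ≤ ‖v‖ * ‖f‖ := by
    have := norm_inner_le_norm (𝕜 := ℂ) v f
    rwa [h1, Complex.norm_real, Real.norm_of_nonneg hS0] at this
  have h3 : ‖v‖ ^ 2 ≤ A * S := by
    have hvv : ‖v‖ ^ 2 = ‖⟪v, v⟫_ℂ‖ := by
      rw [inner_self_eq_norm_sq_to_K]; simp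
    rw [hvv]
    calc ‖⟪v, v⟫_ℂ‖ = ‖∑ j ∈ J, ∑ k ∈ J, (starRingEnd ℂ) (c j) * (c k * ⟪g j, g k⟫_ℂ)‖ := by
          congr 1
          rw [hv, sum_inner]
          refine Finset.sum_congr rfl fun j _ => ?_
          rw [inner_smul_left, inner_sum, Finset.mul_sum]
          refine Finset.sum_congr rfl fun k _ => ?_
          rw [inner_smul_right]
      _ ≤ ∑ j ∈ J, ∑ k ∈ J, ‖c j‖ * ‖c k‖ * ‖⟪g j, g k⟫_ℂ‖ := by
          refine (norm_sum_le _ _).trans (Finset.sum_le_sum fun j _ => ?_)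
          refine (norm_sum_le _ _).trans (Finset.sum_le_sum fun k _ => ?_)
          rw [norm_mul, norm_mul, RCLike.norm_conj, mul_assoc]
      _ ≤ ∑ j ∈ J, ∑ k ∈ J, (‖c j‖ ^ 2 / 2 * ‖⟪g j, g k⟫_ℂ‖ + ‖c k‖ ^ 2 / 2 * ‖⟪g k, g j⟫_ℂ‖) := by
          refine Finset.sum_le_sum fun j _ => Finset.sum_le_sum fun k _ => ?_
          rw [norm_inner_symm (g k) (g j), ← add_mul]
          gcongr
          nlinarith [sq_nonneg (‖c j‖ - ‖c k‖)]
      _ = ∑ j ∈ J, ∑ k ∈ J, ‖c j‖ ^ 2 * ‖⟪g j, g k⟫_ℂ‖ := by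
          simp_rw [Finset.sum_add_distrib]
          rw [Finset.sum_comm (f := fun j k => ‖c k‖ ^ 2 / 2 * ‖⟪g k, g j⟫_ℂ‖),
            ← Finset.sum_add_distrib]
          refine Finset.sum_congr rfl fun j _ => ?_
          rw [← Finset.sum_add_distrib]
          refine Finset.sum_congr rfl fun k _ => ?_
          ring
      _ ≤ ∑ j ∈ J, ‖c j‖ ^ 2 * A := by
          refine Finset.sum_le_sum fun j hj => ?_
          rw [← Finset.mul_sum]
          gcongr
          exact hA j hj
      _ = A * S := by rw [← Finset.sum_mul, mul_comm]
  by_cases hS1 : S = 0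
  · rw [hS1]; positivity
  have hSp : 0 < S := lt_of_le_of_ne hS0 (Ne.symm hS1)
  have h4 : S ^ 2 ≤ A * S * ‖f‖ ^ 2 := by
    calc S ^ 2 ≤ (‖v‖ * ‖f‖) ^ 2 := by gcongr
      _ = ‖v‖ ^ 2 * ‖f‖ ^ 2 := by ring
      _ ≤ _ := by gcongr
  have h5 : S * S ≤ A * ‖f‖ ^ 2 * S := by nlinarith
  exact le_of_mul_le_mul_right h5 hSp

lemma one_le_wt {x : ℝ} (hx : x ∈ Set.Ioc (1 : ℝ) 2) : 1 ≤ wt x := by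
  unfold wt; nlinarith [hx.1, hx.2]

lemma wt_nonneg {x : ℝ} (hx : x ∈ Set.Ioc (1/2 : ℝ) 3) : 0 ≤ wt x := by
  unfold wt; nlinarith [hx.1, hx.2]

lemma inner_toLp {μ : Measure ℝ} {u v : ℝ → ℂ} (hu : MemLp u 2 μ) (hv : MemLp v 2 μ) :
    ⟪hu.toLp u, hv.toLp v⟫_ℂ = ∫ x, (starRingEnd ℂ) (u x) * v x ∂μ := by
  rw [L2.inner_def]
  apply integral_congr_ae
  filter_upwards [hu.coeFn_toLp, hv.coeFn_toLp] with x h1 h2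
  rw [h1, h2, RCLike.inner_apply']

/-- The oscillatory integral over a set of frequencies of the half line. -/
def osc (a : ℝ) (S : Set ℝ) (G : ℝ → ℂ) (r t : ℝ) : ℂ :=
  ∫ x in S, Complex.exp (Complex.I * ((r * x + t * x ^ a : ℝ) : ℂ)) * G x

lemma osc_grid_bound (a : ℝ) {W A : ℝ} (hA0 : 0 ≤ A) (κ : ℤ → ℝ)
    (hκ : ∀ w, |w| ≤ 2 * W → ∀ m : ℤ, ‖kern a m w‖ ≤ κ m)
    (J : Finset ℤ) (hJ : ∀ j ∈ J, ∑ k ∈ J, κ (k - j) ≤ A)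
    {G : ℝ → ℂ} (hG : Continuous G) (θ : ℝ) (t : ℤ → ℝ) (ht : ∀ m, |t m| ≤ W) :
    ∑ m ∈ J, ‖osc a (Set.Ioc 1 2) G (m + θ) (t m)‖ ^ 2
      ≤ A * ∫ x in Set.Ioc (1 : ℝ) 2, ‖G x‖ ^ 2 := by
  set μ : Measure ℝ := volume.restrict (Set.Ioc (1/2 : ℝ) 3) with hμ
  set φ : ℤ → ℝ → ℝ := fun m x => (m + θ) * x + t m * x ^ a with hφ
  set u : ℤ → ℝ → ℂ := fun m x => Complex.exp (-(Complex.I * (φ m x : ℂ))) * (√(wt x) : ℂ) with hu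
  set f : ℝ → ℂ := (Set.Ioc (1 : ℝ) 2).indicator (fun x => G x / (√(wt x) : ℂ)) with hf
  have hwm : Measurable wt := by unfold wt; fun_prop
  have hnu : ∀ m x, ‖u m x‖ = √(wt x) := by
    intro m x
    simp only [hu]
    rw [norm_mul, ← mul_neg, ← Complex.ofReal_neg, norm_cexp_I_mul, one_mul, Complex.norm_real,
      Real.norm_of_nonneg (Real.sqrt_nonneg _)]
  have hum : ∀ m, MemLp (u m) 2 μ := by
    intro m
    refine MemLp.of_bound ?_ 2 ?_
    · apply Measurable.aestronglyMeasurable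
      simp only [hu, hφ]
      fun_prop
    · refine (ae_restrict_iff' measurableSet_Ioc).2 (Filter.Eventually.of_forall fun x hx => ?_)
      rw [hnu, Real.sqrt_le_left (by norm_num)]
      have := (le_abs_self _).trans (abs_wt_le ⟨hx.1.le, hx.2⟩)
      linarith
  obtain ⟨M, hM⟩ := isCompact_Icc.exists_bound_of_continuousOn (hG.continuousOn (s := Set.Icc 1 2))
  have hnf : ∀ x ∈ Set.Ioc (1 : ℝ) 2, ‖G x / (√(wt x) : ℂ)‖ ≤ ‖G x‖ := by
    intro x hx
    rw [norm_div, Complex.norm_real, Real.norm_of_nonneg (Real.sqrt_nonneg _)]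
    apply div_le_self (norm_nonneg _)
    exact Real.one_le_sqrt.2 (one_le_wt hx)
  have hfm : MemLp f 2 μ := by
    refine MemLp.of_bound ?_ (max M 0) (Filter.Eventually.of_forall fun x => ?_)
    · apply Measurable.aestronglyMeasurable
      apply Measurable.indicator _ measurableSet_Ioc
      have := hG.measurable
      fun_prop
    · by_cases hx : x ∈ Set.Ioc (1 : ℝ) 2
      · simp only [hf]
        rw [Set.indicator_of_mem hx]
        exact (hnf x hx).trans ((hM x ⟨hx.1.le, hx.2⟩).trans (le_max_left _ _))
      · simp only [hf]
        rw [Set.indicator_of_notMem hx]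
        simp
  have hgf : ∀ m, ⟪(hum m).toLp (u m), hfm.toLp f⟫_ℂ = osc a (Set.Ioc 1 2) G (m + θ) (t m) := by
    intro m
    rw [inner_toLp, osc, ← integral_indicator measurableSet_Ioc,
      ← integral_indicator measurableSet_Ioc]
    congr 1
    ext x
    by_cases hx : x ∈ Set.Ioc (1 : ℝ) 2
    · have hx' : x ∈ Set.Ioc (1/2 : ℝ) 3 := ⟨by linarith [hx.1], by linarith [hx.2]⟩
      rw [Set.indicator_of_mem hx, Set.indicator_of_mem hx']
      simp only [hf, hu]
      rw [Set.indicator_of_mem hx, map_mul, ← Complex.exp_conj, map_neg, map_mul, Complex.conj_I,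
        Complex.conj_ofReal, Complex.conj_ofReal]
      have : (√(wt x) : ℂ) ≠ 0 := by
        exact_mod_cast (Real.sqrt_pos.2 (lt_of_lt_of_le one_pos (one_le_wt hx))).ne'
      simp only [hφ, neg_mul, neg_neg]
      field_simp
    · rw [Set.indicator_of_notMem hx]
      by_cases hx' : x ∈ Set.Ioc (1/2 : ℝ) 3
      · rw [Set.indicator_of_mem hx']
        simp only [hf]
        rw [Set.indicator_of_notMem hx, mul_zero]
      · rw [Set.indicator_of_notMem hx']
  have hgg : ∀ j k, ‖⟪(hum j).toLp (u j), (hum k).toLp (u k)⟫_ℂ‖ ≤ κ (k - j) := by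
    intro j k
    have h0 : |t j - t k| ≤ 2 * W := by
      have := abs_sub (t j) (t k)
      linarith [ht j, ht k]
    have h1 : ⟪(hum j).toLp (u j), (hum k).toLp (u k)⟫_ℂ
        = kern a ((j - k : ℤ) : ℝ) (t j - t k) := by
      rw [inner_toLp, kern, intervalIntegral.integral_of_le (by norm_num), hμ]
      apply setIntegral_congr_fun measurableSet_Ioc
      intro x hx
      simp only [hu]
      rw [map_mul, ← Complex.exp_conj, map_neg, map_mul, Complex.conj_I, Complex.conj_ofReal,
        Complex.conj_ofReal, mul_mul_mul_comm, ← Complex.exp_add, ← Complex.ofReal_mul,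
        Real.mul_self_sqrt (wt_nonneg hx)]
      congr 2
      simp only [hφ]
      push_cast
      ring
    have h2 : ‖kern a ((j - k : ℤ) : ℝ) (t j - t k)‖ = ‖kern a ((k - j : ℤ) : ℝ) (t k - t j)‖ := by
      rw [← RCLike.norm_conj, ← kern_neg]
      congr 2 <;> push_cast <;> ring
    rw [h1, h2]
    rw [abs_sub_comm] at h0
    exact hκ _ h0 _
  have hsel := selberg_inequality J (fun m => (hum m).toLp (u m)) (hfm.toLp f) hA0
    (fun j hj => (Finset.sum_le_sum fun k _ => hgg j k).trans (hJ j hj))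
  simp_rw [hgf] at hsel
  refine hsel.trans ?_
  gcongr
  have hnorm : ‖hfm.toLp f‖ ^ 2 = ∫ x, ‖f x‖ ^ 2 ∂μ := by
    have h := inner_toLp hfm hfm
    rw [inner_self_eq_norm_sq_to_K] at h
    have h' : ∀ x, (starRingEnd ℂ) (f x) * f x = ((‖f x‖ ^ 2 : ℝ) : ℂ) := by
      intro x
      rw [← Complex.normSq_eq_conj_mul_self, Complex.normSq_eq_norm_sq]
    simp_rw [h'] at h
    rw [integral_complex_ofReal] at h
    exact Complex.ofReal_injective ((Complex.ofReal_pow _ _).trans h)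
  rw [hnorm, hμ, ← integral_indicator measurableSet_Ioc, ← integral_indicator measurableSet_Ioc]
  apply integral_mono_of_nonneg
  · refine Filter.Eventually.of_forall fun x => ?_
    exact Set.indicator_nonneg (fun _ _ => by positivity) x
  · rw [integrable_indicator_iff measurableSet_Ioc]
    exact ((hG.norm.pow 2).continuousOn.integrableOn_Icc).mono_set Set.Ioc_subset_Icc_self
  · refine Filter.Eventually.of_forall fun x => ?_
    by_cases hx : x ∈ Set.Ioc (1 : ℝ) 2
    · have hx' : x ∈ Set.Ioc (1/2 : ℝ) 3 := ⟨by linarith [hx.1], by linarith [hx.2]⟩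
      simp only [hf]
      rw [Set.indicator_of_mem hx, Set.indicator_of_mem hx', Set.indicator_of_mem hx]
      gcongr
      exact hnf x hx
    · simp only [hf]
      rw [Set.indicator_of_notMem hx]
      by_cases hx' : x ∈ Set.Ioc (1/2 : ℝ) 3
      · rw [Set.indicator_of_mem hx', Set.indicator_of_notMem hx]; simp
      · rw [Set.indicator_of_notMem hx']

lemma continuous_osc (a : ℝ) {S : Set ℝ} {G : ℝ → ℂ}
    (hG : IntegrableOn G S) : Continuous (fun q : ℝ × ℝ => osc a S G q.1 q.2) := by
  unfold osc
  refine continuous_of_dominated (bound := fun x => ‖G x‖) ?_ ?_ hG.norm ?_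
  · intro q
    refine AEStronglyMeasurable.mul ?_ hG.aestronglyMeasurable
    apply Measurable.aestronglyMeasurable
    fun_prop
  · intro q
    refine Filter.Eventually.of_forall fun x => ?_
    rw [norm_mul, norm_cexp_I_mul, one_mul]
  · refine Filter.Eventually.of_forall fun x => ?_
    fun_prop

/-- The maximal function of `osc` over times in `[-W, W]`. -/
def maxOsc (a W : ℝ) (S : Set ℝ) (G : ℝ → ℂ) (r : ℝ) : ℝ≥0∞ :=
  ⨆ t : Set.Icc (-W) W, ‖osc a S G r t‖ₑ

lemma measurable_maxOsc (a W : ℝ) {S : Set ℝ} {G : ℝ → ℂ}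
    (hG : IntegrableOn G S) : Measurable (maxOsc a W S G) := by
  apply LowerSemicontinuous.measurable
  unfold maxOsc
  apply lowerSemicontinuous_iSup
  intro t
  apply Continuous.lowerSemicontinuous
  have := continuous_osc a hG
  exact (this.comp (by fun_prop : Continuous (fun r : ℝ => (r, (t : ℝ))))).enorm

lemma exists_maxOsc_eq (a : ℝ) {W : ℝ} (hW : 0 ≤ W) {S : Set ℝ} {G : ℝ → ℂ}
    (hG : IntegrableOn G S) (r : ℝ) :
    ∃ t, |t| ≤ W ∧ maxOsc a W S G r = ‖osc a S G r t‖ₑ := by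
  have hc : Continuous (fun t => ‖osc a S G r t‖ₑ) :=
    ((continuous_osc a hG).comp (by fun_prop : Continuous (fun t : ℝ => (r, t)))).enorm
  obtain ⟨t, ht, hmax⟩ := isCompact_Icc.exists_isMaxOn
    (Set.nonempty_Icc.2 (by linarith : -W ≤ W)) hc.continuousOn
  refine ⟨t, abs_le.2 ht, le_antisymm (iSup_le fun t' => hmax t'.2) ?_⟩
  exact le_iSup (fun t : Set.Icc (-W) W => ‖osc a S G r t‖ₑ) ⟨t, ht⟩

lemma lintegral_eq_lintegral_tsum_translates {f : ℝ → ℝ≥0∞} (hf : Measurable f) :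
    ∫⁻ y, f y = ∫⁻ θ in Set.Ioc (0 : ℝ) 1, ∑' m : ℤ, f (m + θ) := by
  rw [lintegral_tsum (fun m => by fun_prop), ← setLIntegral_univ, ← iUnion_Ioc_intCast ℝ,
    lintegral_iUnion (fun _ => measurableSet_Ioc) (Set.pairwise_disjoint_Ioc_intCast ℝ)]
  refine tsum_congr fun m => ?_
  have h := (measurePreserving_add_left volume (m : ℝ)).setLIntegral_comp_preimage
    (measurableSet_Ioc (a := (m : ℝ)) (b := m + 1)) hf
  rw [← h]
  congr 2
  ext x
  simp

lemma summable_one_add_abs_rpow {ε : ℝ} (hε : 0 < ε) :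
    Summable (fun m : ℤ => (1 + |(m : ℝ)|) ^ (-(1 + ε))) := by
  have h := (Real.summable_one_div_int_add_rpow (1/2) (1 + ε)).2 (by linarith)
  refine Summable.of_nonneg_of_le (fun m => by positivity) (fun m => ?_) h
  have hne : (m : ℝ) + 1/2 ≠ 0 := by
    intro h0
    have h1 : ((2 * m + 1 : ℤ) : ℝ) = 0 := by push_cast; linarith
    have h2 : 2 * m + 1 = 0 := by exact_mod_cast h1
    omega
  rw [Real.rpow_neg (by positivity), one_div]
  have h3 : |(m : ℝ) + 1/2| ≤ 1 + |(m : ℝ)| := by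
    have := abs_add_le (m : ℝ) (1/2)
    rw [abs_of_pos (by norm_num : (0 : ℝ) < 1/2)] at this
    linarith
  have h4 : 0 < |(m : ℝ) + 1/2| := abs_pos.2 hne
  gcongr

lemma lintegral_enorm_sq_eq {S : Set ℝ} {G : ℝ → ℂ}
    (hG : IntegrableOn (fun x => ‖G x‖ ^ 2) S) :
    ∫⁻ x in S, ‖G x‖ₑ ^ 2 = ENNReal.ofReal (∫ x in S, ‖G x‖ ^ 2) := by
  rw [ofReal_integral_eq_lintegral_ofReal hG (Filter.Eventually.of_forall fun x => by positivity)]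
  congr 1
  ext x
  rw [ENNReal.ofReal_pow (norm_nonneg _), ofReal_norm]

lemma lintegral_maxOsc_unit {a : ℝ} (ha : 0 < a) (ha1 : a ≠ 1) {ε : ℝ} (hε : 0 < ε)
    (hε1 : ε ≤ 1) :
    ∃ C > 0, ∀ W ≥ (1 : ℝ), ∀ G : ℝ → ℂ, Continuous G →
      ∫⁻ y, maxOsc a W (Set.Ioc 1 2) G y ^ 2
        ≤ ENNReal.ofReal (C * W ^ (1/2 + ε)) * ∫⁻ x in Set.Ioc (1 : ℝ) 2, ‖G x‖ₑ ^ 2 := by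
  obtain ⟨C, hC, hk⟩ := kern_bound ha ha1 hε.le hε1
  have hsum := summable_one_add_abs_rpow hε
  set Z : ℝ := ∑' m : ℤ, (1 + |(m : ℝ)|) ^ (-(1 + ε)) with hZ
  have hZ1 : 0 < Z := hsum.tsum_pos (fun m => by positivity) 0 (by positivity)
  refine ⟨C * Z, by positivity, ?_⟩
  intro W hW G hG
  set κ : ℤ → ℝ := fun m => C * W ^ (1/2 + ε) * (1 + |(m : ℝ)|) ^ (-(1 + ε)) with hκ
  have hJ : ∀ J : Finset ℤ, ∀ j ∈ J, ∑ k ∈ J, κ (k - j) ≤ C * Z * W ^ (1/2 + ε) := by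
    intro J j _
    simp only [hκ]
    rw [← Finset.mul_sum]
    have h1 : ∑ k ∈ J, (1 + |((k - j : ℤ) : ℝ)|) ^ (-(1 + ε)) ≤ Z := by
      rw [hZ, ← (Equiv.subRight j).tsum_eq]
      exact ((Equiv.subRight j).summable_iff.2 hsum).sum_le_tsum J (fun _ _ => by positivity)
    calc _ ≤ C * W ^ (1/2 + ε) * Z := by gcongr
      _ = _ := by ring
  have hGi : IntegrableOn G (Set.Ioc 1 2) :=
    (hG.continuousOn.integrableOn_Icc).mono_set Set.Ioc_subset_Icc_self
  have hGi2 : IntegrableOn (fun x => ‖G x‖ ^ 2) (Set.Ioc 1 2) :=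
    ((hG.norm.pow 2).continuousOn.integrableOn_Icc).mono_set Set.Ioc_subset_Icc_self
  have hm := measurable_maxOsc a W hGi
  rw [lintegral_eq_lintegral_tsum_translates (hm.pow_const 2)]
  set Q := ENNReal.ofReal (C * Z * W ^ (1/2 + ε)) * ∫⁻ x in Set.Ioc (1 : ℝ) 2, ‖G x‖ₑ ^ 2 with hQ
  have hθ : ∀ θ : ℝ, ∑' m : ℤ, maxOsc a W (Set.Ioc 1 2) G (m + θ) ^ 2 ≤ Q := by
    intro θ
    have := fun m : ℤ => exists_maxOsc_eq a (by linarith : 0 ≤ W) hGi (m + θ)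
    choose t ht hmax using this
    rw [ENNReal.tsum_eq_iSup_sum]
    refine iSup_le fun J => ?_
    have h := osc_grid_bound a (by positivity) κ (fun w hw m => hk W hW w hw m) J (hJ J) hG θ t ht
    have h2 := ENNReal.ofReal_le_ofReal h
    rw [ENNReal.ofReal_mul (by positivity), ← lintegral_enorm_sq_eq hGi2,
      ENNReal.ofReal_sum_of_nonneg (fun _ _ => by positivity)] at h2
    refine le_trans (le_of_eq (Finset.sum_congr rfl fun m _ => ?_)) h2
    rw [hmax, ENNReal.ofReal_pow (norm_nonneg _), ofReal_norm]
  calc _ ≤ ∫⁻ θ in Set.Ioc (0 : ℝ) 1, Q := lintegral_mono fun θ => hθ θ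
    _ = Q := by simp

lemma lintegral_mul_sq_le {α : Type*} [MeasurableSpace α] {μ : Measure α} {f g : α → ℝ≥0∞}
    (hf : AEMeasurable f μ) (hg : AEMeasurable g μ) :
    (∫⁻ x, f x * g x ∂μ) ^ 2 ≤ (∫⁻ x, f x ^ 2 ∂μ) * ∫⁻ x, g x ^ 2 ∂μ := by
  have h := ENNReal.lintegral_mul_le_Lp_mul_Lq μ Real.HolderConjugate.two_two hf hg
  simp only [Pi.mul_apply, ENNReal.rpow_two] at h
  refine (pow_le_pow_left' h 2).trans (le_of_eq ?_)
  rw [mul_pow, ← ENNReal.rpow_two, ← ENNReal.rpow_two, ← ENNReal.rpow_mul, ← ENNReal.rpow_mul]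
  norm_num

lemma tsum_mul_sq_le (f g : ℕ → ℝ≥0∞) :
    (∑' k, f k * g k) ^ 2 ≤ (∑' k, f k ^ 2) * ∑' k, g k ^ 2 := by
  have h := lintegral_mul_sq_le (μ := Measure.count) (f := f) (g := g)
    (measurable_of_countable _).aemeasurable (measurable_of_countable _).aemeasurable
  simpa [lintegral_count] using h

lemma lintegral_comp_mul_left_real {N : ℝ} (hN : 0 < N) (f : ℝ → ℝ≥0∞) (hf : Measurable f) :
    ENNReal.ofReal N * ∫⁻ x, f (N * x) = ∫⁻ x, f x := by
  have h := Real.map_volume_mul_left hN.ne'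
  rw [← lintegral_map hf (measurable_const_mul N), h, lintegral_smul_measure, smul_eq_mul,
    ← mul_assoc, ← ENNReal.ofReal_mul hN.le, abs_of_pos (inv_pos.2 hN), mul_inv_cancel₀ hN.ne']
  simp

lemma osc_scale (a : ℝ) {N : ℝ} (hN : 0 < N) (G : ℝ → ℂ) (r t : ℝ) :
    osc a (Set.Ioc N (2 * N)) G r t
      = (N : ℂ) * osc a (Set.Ioc 1 2) (fun x => G (N * x)) (N * r) (t * N ^ a) := by
  unfold osc
  rw [← intervalIntegral.integral_of_le (by linarith),
    ← intervalIntegral.integral_of_le (by norm_num)]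
  have h := intervalIntegral.smul_integral_comp_mul_left (a := 1) (b := 2) 
    (fun x : ℝ => Complex.exp (Complex.I * ((r * x + t * x ^ a : ℝ) : ℂ)) * G x) N
  rw [mul_one, mul_comm N 2] at h
  rw [← h, Complex.real_smul]
  congr 1
  apply intervalIntegral.integral_congr
  intro x hx
  rw [Set.uIcc_of_le (by norm_num)] at hx
  have hx0 : 0 ≤ x := by linarith [hx.1]
  simp only
  rw [Real.mul_rpow hN.le hx0]
  congr 4
  ring

lemma maxOsc_scale {a : ℝ} {N : ℝ} (hN : 0 < N) (G : ℝ → ℂ) (r : ℝ) :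
    maxOsc a 1 (Set.Ioc N (2 * N)) G r
      ≤ ENNReal.ofReal N * maxOsc a (N ^ a) (Set.Ioc 1 2) (fun x => G (N * x)) (N * r) := by
  have hNa : 0 < N ^ a := by positivity
  refine iSup_le fun t => ?_
  rw [osc_scale a hN, enorm_mul]
  have h1 : ‖(N : ℂ)‖ₑ = ENNReal.ofReal N := by
    rw [← ofReal_norm, Complex.norm_real, Real.norm_of_nonneg hN.le]
  rw [h1]
  gcongr
  refine le_iSup (fun τ : Set.Icc (-N ^ a) (N ^ a) =>
    ‖osc a (Set.Ioc 1 2) (fun x => G (N * x)) (N * r) τ‖ₑ) ⟨t * N ^ a, ?_⟩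
  obtain ⟨t, ht1, ht2⟩ := t
  constructor <;> simp only <;> nlinarith

lemma lintegral_maxOsc_dyadic {a : ℝ} (ha : 0 < a) (ha1 : a ≠ 1) {ε : ℝ} (hε : 0 < ε)
    (hε1 : ε ≤ 1) :
    ∃ C > 0, ∀ N ≥ (1 : ℝ), ∀ G : ℝ → ℂ, Continuous G →
      ∫⁻ r, maxOsc a 1 (Set.Ioc N (2 * N)) G r ^ 2
        ≤ ENNReal.ofReal (C * (N ^ a) ^ (1/2 + ε))
          * ∫⁻ x in Set.Ioc N (2 * N), ‖G x‖ₑ ^ 2 := by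
  obtain ⟨C, hC, h⟩ := lintegral_maxOsc_unit ha ha1 hε hε1
  refine ⟨C, hC, fun N hN G hG => ?_⟩
  have hN0 : 0 < N := by linarith
  have hG' : Continuous (fun x => G (N * x)) := by fun_prop
  have h1 := h (N ^ a) (Real.one_le_rpow hN ha.le) _ hG'
  set M := maxOsc a (N ^ a) (Set.Ioc 1 2) (fun x => G (N * x)) with hM
  have hMm : Measurable M := measurable_maxOsc a (N ^ a)
    ((hG'.continuousOn.integrableOn_Icc).mono_set Set.Ioc_subset_Icc_self)
  have h2 : ENNReal.ofReal N * ∫⁻ x in Set.Ioc (1 : ℝ) 2, ‖G (N * x)‖ₑ ^ 2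
      = ∫⁻ x in Set.Ioc N (2 * N), ‖G x‖ₑ ^ 2 := by
    rw [← lintegral_indicator measurableSet_Ioc, ← lintegral_indicator measurableSet_Ioc,
      ← lintegral_comp_mul_left_real hN0 _
        ((hG.enorm.measurable.pow_const 2).indicator measurableSet_Ioc)]
    congr 2
    ext x
    by_cases hx : x ∈ Set.Ioc (1 : ℝ) 2
    · rw [Set.indicator_of_mem hx, Set.indicator_of_mem]
      constructor <;> nlinarith [hx.1, hx.2]
    · rw [Set.indicator_of_notMem hx, Set.indicator_of_notMem]
      contrapose! hx
      constructor
      · by_contra! h; nlinarith [hx.1]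
      · by_contra! h; nlinarith [hx.2]
  calc ∫⁻ r, maxOsc a 1 (Set.Ioc N (2 * N)) G r ^ 2
      ≤ ∫⁻ r, (ENNReal.ofReal N * M (N * r)) ^ 2 :=
        lintegral_mono fun r => pow_le_pow_left' (maxOsc_scale hN0 G r) 2
    _ = ENNReal.ofReal N ^ 2 * ∫⁻ r, M (N * r) ^ 2 := by
        simp_rw [mul_pow]
        rw [lintegral_const_mul]
        fun_prop
    _ = ENNReal.ofReal N * ∫⁻ r, M r ^ 2 := by
        rw [sq, mul_assoc, lintegral_comp_mul_left_real hN0 (fun r => M r ^ 2) (hMm.pow_const 2)]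
    _ ≤ ENNReal.ofReal N * (ENNReal.ofReal (C * (N ^ a) ^ (1/2 + ε))
          * ∫⁻ x in Set.Ioc (1 : ℝ) 2, ‖G (N * x)‖ₑ ^ 2) := by gcongr
    _ = _ := by rw [← h2]; ring

lemma lintegral_osc_sq_le {a : ℝ} (ha : 0 < a) (ha1 : a ≠ 1) :
    ∃ C : ℝ, 0 < C ∧ ∀ G : ℝ → ℂ, Continuous G → ∀ t,
      ∫⁻ r, ‖osc a (Set.Ioc 0 1) G r t‖ₑ ^ 2
        ≤ ENNReal.ofReal C * ∫⁻ x in Set.Ioc (0 : ℝ) 1, ‖G x‖ₑ ^ 2 := by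
  obtain ⟨C, hC, h⟩ := lintegral_maxOsc_unit ha ha1 one_pos le_rfl
  refine ⟨C, hC, fun G hG t => ?_⟩
  set H : ℝ → ℂ := fun x =>
    Complex.exp (Complex.I * ((t * (x - 1) ^ a : ℝ) : ℂ)) * G (x - 1) with hH
  have hHc : Continuous H := by
    have : Continuous (fun x : ℝ => (x - 1) ^ a) :=
      (continuous_id.sub continuous_const).rpow_const (fun _ => Or.inr ha.le)
    fun_prop
  have hHn : ∀ x, ‖H x‖ₑ = ‖G (x - 1)‖ₑ := by
    intro x
    rw [← ofReal_norm, hH, norm_mul, norm_cexp_I_mul, one_mul, ofReal_norm]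
  have h1 := h 1 le_rfl H hHc
  have h2 : ∫⁻ x in Set.Ioc (1 : ℝ) 2, ‖H x‖ₑ ^ 2 = ∫⁻ x in Set.Ioc (0 : ℝ) 1, ‖G x‖ₑ ^ 2 := by
    simp_rw [hHn]
    have := (measurePreserving_sub_right volume (1 : ℝ)).setLIntegral_comp_preimage
      (measurableSet_Ioc (a := (0 : ℝ)) (b := 1)) (hG.enorm.measurable.pow_const 2)
    rw [← this]
    congr 2
    ext x
    simp only [Set.mem_Ioc, Set.mem_preimage]
    constructor <;> rintro ⟨h1, h2⟩ <;> constructor <;> linarith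
  rw [Real.one_rpow, mul_one, h2] at h1
  refine le_trans (lintegral_mono fun r => pow_le_pow_left' ?_ 2) h1
  have h3 : osc a (Set.Ioc 1 2) H r 0
      = Complex.exp (Complex.I * (r : ℂ)) * osc a (Set.Ioc 0 1) G r t := by
    unfold osc
    rw [← intervalIntegral.integral_of_le (by norm_num),
      ← intervalIntegral.integral_of_le (by norm_num)]
    have := intervalIntegral.integral_comp_sub_right (a := 1) (b := 2) (fun x : ℝ =>
      Complex.exp (Complex.I * ((r * x + t * x ^ a : ℝ) : ℂ)) * G x) 1
    norm_num only at this
    rw [← this, ← intervalIntegral.integral_const_mul]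
    congr 1
    ext x
    simp only [hH]
    rw [← mul_assoc, ← mul_assoc, ← Complex.exp_add, ← Complex.exp_add]
    congr 2
    push_cast
    ring
  calc ‖osc a (Set.Ioc 0 1) G r t‖ₑ = ‖osc a (Set.Ioc 1 2) H r 0‖ₑ := by
        rw [h3, enorm_mul, ← ofReal_norm (Complex.exp _), norm_cexp_I_mul]
        simp
    _ ≤ _ := le_iSup (fun t : Set.Icc (-1 : ℝ) 1 => ‖osc a (Set.Ioc 1 2) H r t‖ₑ) ⟨0, by simp⟩

lemma ennreal_add_sq_le (x y : ℝ≥0∞) : (x + y) ^ 2 ≤ 2 * (x ^ 2 + y ^ 2) := by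
  have h := ENNReal.rpow_add_le_mul_rpow_add_rpow x y (by norm_num : (1 : ℝ) ≤ 2)
  norm_num at h
  exact h

lemma hasDerivAt_osc {a : ℝ} (ha : 0 < a) {G : ℝ → ℂ} (hG : Continuous G) (r t : ℝ) :
    HasDerivAt (fun t => osc a (Set.Ioc 0 1) G r t)
      (osc a (Set.Ioc 0 1) (fun x => Complex.I * ((x ^ a : ℝ) : ℂ) * G x) r t) t := by
  have hra : Continuous (fun x : ℝ => x ^ a) :=
    continuous_id.rpow_const (fun _ => Or.inr ha.le)
  have hint : ∀ f : ℝ → ℂ, Continuous f → IntegrableOn f (Set.Ioc 0 1) := fun f hf =>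
    (hf.continuousOn.integrableOn_Icc).mono_set Set.Ioc_subset_Icc_self
  have hintr : ∀ f : ℝ → ℝ, Continuous f → IntegrableOn f (Set.Ioc 0 1) := fun f hf =>
    (hf.continuousOn.integrableOn_Icc).mono_set Set.Ioc_subset_Icc_self
  unfold osc
  refine (hasDerivAt_integral_of_dominated_loc_of_deriv_le (bound := fun x => ‖x ^ a‖ * ‖G x‖)
    (s := Set.univ)
    (F' := fun t x => Complex.exp (Complex.I * ((r * x + t * x ^ a : ℝ) : ℂ)) *
      (Complex.I * ((x ^ a : ℝ) : ℂ) * G x)) Filter.univ_mem ?_ ?_ ?_ ?_ ?_ ?_).2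
  · refine Filter.Eventually.of_forall fun t => ?_
    exact (hint _ (by fun_prop)).aestronglyMeasurable
  · exact hint _ (by fun_prop)
  · exact (hint _ (by fun_prop)).aestronglyMeasurable
  · refine Filter.Eventually.of_forall fun x t _ => ?_
    rw [norm_mul, norm_cexp_I_mul, one_mul, norm_mul, norm_mul, Complex.norm_I, one_mul,
      Complex.norm_real]
  · exact hintr _ (by fun_prop)
  · refine Filter.Eventually.of_forall fun x t _ => ?_
    have h1 : HasDerivAt (fun t : ℝ => r * x + t * x ^ a) (x ^ a) t := by
      simpa using ((hasDerivAt_id t).mul_const (x ^ a)).const_add (r * x)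
    have h2 := (hasDerivAt_cexp_phase h1).mul_const (G x)
    convert! h2 using 1
    ring

lemma maxOsc_low_le {a : ℝ} (ha : 0 < a) {G : ℝ → ℂ} (hG : Continuous G) (r : ℝ) :
    maxOsc a 1 (Set.Ioc 0 1) G r ≤ ‖osc a (Set.Ioc 0 1) G r 0‖ₑ
      + ∫⁻ τ in Set.Icc (-1 : ℝ) 1,
        ‖osc a (Set.Ioc 0 1) (fun x => Complex.I * ((x ^ a : ℝ) : ℂ) * G x) r τ‖ₑ := by
  have hra : Continuous (fun x : ℝ => x ^ a) :=
    continuous_id.rpow_const (fun _ => Or.inr ha.le)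
  set H : ℝ → ℂ := fun x => Complex.I * ((x ^ a : ℝ) : ℂ) * G x with hH
  have hHc : Continuous H := by fun_prop
  have hHi : IntegrableOn H (Set.Ioc 0 1) :=
    (hHc.continuousOn.integrableOn_Icc).mono_set Set.Ioc_subset_Icc_self
  have hc : Continuous (fun t => osc a (Set.Ioc 0 1) H r t) :=
    (continuous_osc a hHi).comp (by fun_prop : Continuous (fun t : ℝ => (r, t)))
  refine iSup_le fun ⟨t, ht⟩ => ?_
  have h := intervalIntegral.integral_eq_sub_of_hasDerivAt (a := 0) (b := t)
    (fun τ _ => hasDerivAt_osc ha hG r τ) (hc.intervalIntegrable _ _)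
  have h1 : osc a (Set.Ioc 0 1) G r t = osc a (Set.Ioc 0 1) G r 0
      + ∫ τ in (0 : ℝ)..t, osc a (Set.Ioc 0 1) H r τ := by
    rw [h]; ring
  simp only
  rw [h1]
  refine (enorm_add_le _ _).trans ?_
  gcongr
  rw [← ofReal_norm, intervalIntegral.norm_intervalIntegral_eq, ofReal_norm]
  refine (enorm_integral_le_lintegral_enorm _).trans ?_
  refine lintegral_mono_set fun τ hτ => ?_
  rcases le_total 0 t with h0 | h0
  · rw [Set.uIoc_of_le h0] at hτ
    exact ⟨by linarith [hτ.1], by linarith [hτ.2, ht.2]⟩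
  · rw [Set.uIoc_of_ge h0] at hτ
    exact ⟨by linarith [hτ.1, ht.1], by linarith [hτ.2]⟩

lemma lintegral_maxOsc_low {a : ℝ} (ha : 0 < a) (ha1 : a ≠ 1) :
    ∃ C : ℝ, 0 < C ∧ ∀ G : ℝ → ℂ, Continuous G →
      ∫⁻ r, maxOsc a 1 (Set.Ioc 0 1) G r ^ 2
        ≤ ENNReal.ofReal C * ∫⁻ x in Set.Ioc (0 : ℝ) 1, ‖G x‖ₑ ^ 2 := by
  obtain ⟨C, hC, h⟩ := lintegral_osc_sq_le ha ha1
  refine ⟨10 * C, by positivity, fun G hG => ?_⟩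
  have hra : Continuous (fun x : ℝ => x ^ a) :=
    continuous_id.rpow_const (fun _ => Or.inr ha.le)
  set H : ℝ → ℂ := fun x => Complex.I * ((x ^ a : ℝ) : ℂ) * G x with hH
  have hHc : Continuous H := by fun_prop
  have hint : ∀ f : ℝ → ℂ, Continuous f → IntegrableOn f (Set.Ioc 0 1) := fun f hf =>
    (hf.continuousOn.integrableOn_Icc).mono_set Set.Ioc_subset_Icc_self
  have hcG : Continuous (fun r => osc a (Set.Ioc 0 1) G r 0) :=
    (continuous_osc a (hint _ hG)).comp (by fun_prop : Continuous (fun r : ℝ => (r, (0 : ℝ))))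
  have hcH := continuous_osc a (hint _ hHc)
  set E := ∫⁻ x in Set.Ioc (0 : ℝ) 1, ‖G x‖ₑ ^ 2 with hE
  have hEH : ∫⁻ x in Set.Ioc (0 : ℝ) 1, ‖H x‖ₑ ^ 2 ≤ E := by
    refine setLIntegral_mono' measurableSet_Ioc fun x hx => pow_le_pow_left' ?_ 2
    rw [← ofReal_norm, ← ofReal_norm]
    apply ENNReal.ofReal_le_ofReal
    rw [hH, norm_mul, norm_mul, Complex.norm_I, one_mul, Complex.norm_real,
      Real.norm_of_nonneg (by have := hx.1; positivity)]
    exact mul_le_of_le_one_left (norm_nonneg _) (Real.rpow_le_one hx.1.le hx.2 ha.le)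
  have hB : ∀ r, (∫⁻ τ in Set.Icc (-1 : ℝ) 1, ‖osc a (Set.Ioc 0 1) H r τ‖ₑ) ^ 2
      ≤ 2 * ∫⁻ τ in Set.Icc (-1 : ℝ) 1, ‖osc a (Set.Ioc 0 1) H r τ‖ₑ ^ 2 := by
    intro r
    have hm : Continuous (fun τ : ℝ => ‖osc a (Set.Ioc 0 1) H r τ‖ₑ) :=
      (hcH.comp (by fun_prop : Continuous (fun τ : ℝ => (r, τ)))).enorm
    have := lintegral_mul_sq_le (μ := volume.restrict (Set.Icc (-1 : ℝ) 1))
      (f := fun _ => 1) aemeasurable_const hm.aemeasurable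
    simp only [one_mul, one_pow, lintegral_const, Measure.restrict_apply_univ,
      Real.volume_Icc] at this
    norm_num at this
    exact this
  have hpt : ∀ r, maxOsc a 1 (Set.Ioc 0 1) G r ^ 2 ≤ 2 * (‖osc a (Set.Ioc 0 1) G r 0‖ₑ ^ 2
      + 2 * ∫⁻ τ in Set.Icc (-1 : ℝ) 1, ‖osc a (Set.Ioc 0 1) H r τ‖ₑ ^ 2) := by
    intro r
    refine (pow_le_pow_left' (maxOsc_low_le ha hG r) 2).trans
      ((ennreal_add_sq_le _ _).trans ?_)
    gcongr
    exact hB r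
  have hm2 : Measurable (fun q : ℝ × ℝ => ‖osc a (Set.Ioc 0 1) H q.1 q.2‖ₑ ^ 2) :=
    hcH.enorm.measurable.pow_const 2
  calc ∫⁻ r, maxOsc a 1 (Set.Ioc 0 1) G r ^ 2
      ≤ ∫⁻ r, 2 * (‖osc a (Set.Ioc 0 1) G r 0‖ₑ ^ 2
        + 2 * ∫⁻ τ in Set.Icc (-1 : ℝ) 1, ‖osc a (Set.Ioc 0 1) H r τ‖ₑ ^ 2) :=
        lintegral_mono hpt
    _ = 2 * ((∫⁻ r, ‖osc a (Set.Ioc 0 1) G r 0‖ₑ ^ 2)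
        + 2 * ∫⁻ τ in Set.Icc (-1 : ℝ) 1, ∫⁻ r, ‖osc a (Set.Ioc 0 1) H r τ‖ₑ ^ 2) := by
        rw [lintegral_const_mul' _ _ (by norm_num),
          lintegral_add_left (hcG.enorm.measurable.pow_const 2),
          lintegral_const_mul' _ _ (by norm_num),
          lintegral_lintegral_swap hm2.aemeasurable]
    _ ≤ 2 * (ENNReal.ofReal C * E
        + 2 * ∫⁻ τ in Set.Icc (-1 : ℝ) 1, ENNReal.ofReal C * E) := by
        gcongr with τ
        · exact h G hG 0
        · exact (h H hHc τ).trans (by gcongr)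
    _ = ENNReal.ofReal (10 * C) * E := by
        rw [setLIntegral_const, Real.volume_Icc, ENNReal.ofReal_mul (by norm_num)]
        norm_num
        ring

lemma iUnion_dyadic : (⋃ k : ℕ, Set.Ioc ((2 : ℝ) ^ k) (2 * 2 ^ k)) = Set.Ioi 1 := by
  have hm : Monotone (fun k : ℕ => (2 : ℝ) ^ k) := fun i j h => pow_le_pow_right₀ (by norm_num) h
  have h := iUnion_Ioc_map_succ_eq_Ioi (f := fun k : ℕ => (2 : ℝ) ^ k)
  simp only [Nat.succ_eq_succ, Nat.succ_eq_add_one, pow_succ', Nat.bot_eq_zero, pow_zero] at h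
  apply h
  · intro n; exact hm n.zero_le
  · rw [not_bddAbove_iff]
    intro x
    obtain ⟨n, hn⟩ := pow_unbounded_of_one_lt x (by norm_num : (1 : ℝ) < 2)
    exact ⟨_, ⟨n, rfl⟩, hn⟩

lemma pairwise_disjoint_dyadic :
    Pairwise (Function.onFun Disjoint fun k : ℕ => Set.Ioc ((2 : ℝ) ^ k) (2 * 2 ^ k)) := by
  have hm : Monotone (fun k : ℕ => (2 : ℝ) ^ k) := fun i j h => pow_le_pow_right₀ (by norm_num) h
  have h := hm.pairwise_disjoint_on_Ioc_succ
  simpa only [Nat.succ_eq_succ, Nat.succ_eq_add_one, pow_succ'] using h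

lemma integrableOn_osc (a : ℝ) {S : Set ℝ} {G : ℝ → ℂ} (hG : IntegrableOn G S) (r t : ℝ) :
    IntegrableOn (fun x => Complex.exp (Complex.I * ((r * x + t * x ^ a : ℝ) : ℂ)) * G x) S := by
  refine hG.norm.mono' ?_ ?_
  · refine AEStronglyMeasurable.mul ?_ hG.aestronglyMeasurable
    apply Measurable.aestronglyMeasurable
    fun_prop
  · refine Filter.Eventually.of_forall fun x => ?_
    rw [norm_mul, norm_cexp_I_mul, one_mul]

lemma maxOsc_high_le (a : ℝ) {G : ℝ → ℂ} (hG : IntegrableOn G (Set.Ioi 1)) (r : ℝ) :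
    maxOsc a 1 (Set.Ioi 1) G r ≤ ∑' k : ℕ, maxOsc a 1 (Set.Ioc (2 ^ k) (2 * 2 ^ k)) G r := by
  refine iSup_le fun t => ?_
  have hi := integrableOn_osc a hG r t
  rw [← iUnion_dyadic] at hi
  have h := hasSum_integral_iUnion (fun k : ℕ => measurableSet_Ioc) pairwise_disjoint_dyadic hi
  have h2 : osc a (Set.Ioi 1) G r t
      = ∑' k : ℕ, osc a (Set.Ioc (2 ^ k) (2 * 2 ^ k)) G r t := by
    rw [← iUnion_dyadic]; exact h.tsum_eq.symm
  rw [h2]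
  refine enorm_tsum_le_tsum_enorm.trans ?_
  exact ENNReal.tsum_le_tsum fun k =>
    le_iSup (fun t : Set.Icc (-1 : ℝ) 1 => ‖osc a (Set.Ioc (2 ^ k) (2 * 2 ^ k)) G r t‖ₑ) t

lemma lintegral_maxOsc_high {a : ℝ} (ha : 0 < a) (ha1 : a ≠ 1) {s : ℝ} (hs : a / 4 < s) :
    ∃ C : ℝ, 0 < C ∧ ∀ G : ℝ → ℂ, Continuous G → IntegrableOn G (Set.Ioi 1) →
      ∫⁻ r, maxOsc a 1 (Set.Ioi 1) G r ^ 2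
        ≤ ENNReal.ofReal C
          * ∫⁻ x in Set.Ioi (1 : ℝ), ENNReal.ofReal ((1 + x ^ 2) ^ s) * ‖G x‖ₑ ^ 2 := by
  set δ := s - a / 4 with hδ
  have hδ0 : 0 < δ := by rw [hδ]; linarith
  set ε := min 1 (δ / a) with hε
  have hε0 : 0 < ε := lt_min one_pos (by positivity)
  have hεa : a * ε ≤ δ := by
    have : ε ≤ δ / a := min_le_right _ _
    rw [le_div_iff₀ ha] at this
    linarith
  obtain ⟨C, hC, h⟩ := lintegral_maxOsc_dyadic ha ha1 hε0 (min_le_left _ _)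
  set q : ℝ := 2 ^ (-δ) with hq
  have hq0 : 0 < q := by positivity
  have hq1 : q < 1 := Real.rpow_lt_one_of_one_lt_of_neg (by norm_num) (by linarith)
  set w : ℕ → ℝ := fun k => Real.sqrt (q ^ k) with hw
  have hw0 : ∀ k, 0 < w k := fun k => Real.sqrt_pos.2 (by positivity)
  have hw2 : ∀ k, w k ^ 2 = q ^ k := fun k => Real.sq_sqrt (by positivity)
  have hqk : ∀ k : ℕ, q ^ k = ((2 : ℝ) ^ k) ^ (-δ) := by
    intro k
    rw [hq, ← Real.rpow_natCast, ← Real.rpow_natCast, ← Real.rpow_mul (by norm_num),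
      ← Real.rpow_mul (by norm_num), mul_comm]
  have hZ : ∑' k : ℕ, ENNReal.ofReal (w k) ^ 2 = ENNReal.ofReal (1 - q)⁻¹ := by
    rw [← tsum_geometric_of_lt_one hq0.le hq1, ENNReal.ofReal_tsum_of_nonneg
      (fun n => by positivity) (summable_geometric_of_lt_one hq0.le hq1)]
    refine tsum_congr fun k => ?_
    rw [← ENNReal.ofReal_pow (hw0 k).le, hw2]
  have h1q : 0 < (1 - q)⁻¹ := inv_pos.2 (by linarith)
  refine ⟨(1 - q)⁻¹ * C, by positivity, fun G hG hGi => ?_⟩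
  set P : ℕ → ℝ → ℝ≥0∞ := fun k r => maxOsc a 1 (Set.Ioc (2 ^ k) (2 * 2 ^ k)) G r with hP
  have hPm : ∀ k, Measurable (P k) := fun k => measurable_maxOsc a 1
    ((hG.continuousOn.integrableOn_Icc).mono_set Set.Ioc_subset_Icc_self)
  have hpt : ∀ r, maxOsc a 1 (Set.Ioi 1) G r ^ 2 ≤ ENNReal.ofReal (1 - q)⁻¹
      * ∑' k : ℕ, ENNReal.ofReal ((w k)⁻¹) ^ 2 * P k r ^ 2 := by
    intro r
    have hmul : ∀ k, P k r = ENNReal.ofReal (w k) * (ENNReal.ofReal ((w k)⁻¹) * P k r) := by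
      intro k
      rw [← mul_assoc, ← ENNReal.ofReal_mul (hw0 k).le, mul_inv_cancel₀ (hw0 k).ne',
        ENNReal.ofReal_one, one_mul]
    refine (pow_le_pow_left' (maxOsc_high_le a hGi r) 2).trans ?_
    rw [tsum_congr hmul]
    refine (tsum_mul_sq_le _ _).trans (le_of_eq ?_)
    rw [hZ]
    simp_rw [mul_pow]
  have hk : ∀ k : ℕ, ENNReal.ofReal ((w k)⁻¹) ^ 2 * ∫⁻ r, P k r ^ 2 ≤ ENNReal.ofReal C
      * ∫⁻ x in Set.Ioc ((2 : ℝ) ^ k) (2 * 2 ^ k),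
        ENNReal.ofReal ((1 + x ^ 2) ^ s) * ‖G x‖ₑ ^ 2 := by
    intro k
    have hN1 : (1 : ℝ) ≤ 2 ^ k := one_le_pow₀ (by norm_num)
    have h1 := h (2 ^ k) hN1 G hG
    set N : ℝ := 2 ^ k with hN
    have hN0 : 0 < N := by linarith
    have hc : (w k)⁻¹ ^ 2 * (C * (N ^ a) ^ (1/2 + ε)) ≤ C * N ^ (2 * s) := by
      rw [inv_pow, hw2, hqk, ← Real.rpow_neg hN0.le, neg_neg, ← Real.rpow_mul hN0.le,
        mul_left_comm, ← Real.rpow_add hN0]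
      gcongr
      · nlinarith
    calc ENNReal.ofReal ((w k)⁻¹) ^ 2 * ∫⁻ r, P k r ^ 2
        ≤ ENNReal.ofReal ((w k)⁻¹) ^ 2 * (ENNReal.ofReal (C * (N ^ a) ^ (1/2 + ε))
          * ∫⁻ x in Set.Ioc N (2 * N), ‖G x‖ₑ ^ 2) := by gcongr
      _ = ENNReal.ofReal ((w k)⁻¹ ^ 2 * (C * (N ^ a) ^ (1/2 + ε)))
          * ∫⁻ x in Set.Ioc N (2 * N), ‖G x‖ₑ ^ 2 := by
          rw [ENNReal.ofReal_mul (p := (w k)⁻¹ ^ 2) (by positivity),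
            ENNReal.ofReal_pow (inv_pos.2 (hw0 k)).le, mul_assoc]
      _ ≤ ENNReal.ofReal (C * N ^ (2 * s)) * ∫⁻ x in Set.Ioc N (2 * N), ‖G x‖ₑ ^ 2 := by
          gcongr
      _ = ENNReal.ofReal C * ∫⁻ x in Set.Ioc N (2 * N),
            ENNReal.ofReal (N ^ (2 * s)) * ‖G x‖ₑ ^ 2 := by
          rw [ENNReal.ofReal_mul hC.le, mul_assoc,
            lintegral_const_mul' _ _ ENNReal.ofReal_ne_top]
      _ ≤ _ := by
          refine mul_le_mul_right ?_ _
          refine setLIntegral_mono' measurableSet_Ioc fun x hx => ?_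
          gcongr
          rw [Real.rpow_mul hN0.le, Real.rpow_two]
          have := hx.1
          gcongr
          · linarith
          · nlinarith
  calc ∫⁻ r, maxOsc a 1 (Set.Ioi 1) G r ^ 2
      ≤ ∫⁻ r, ENNReal.ofReal (1 - q)⁻¹
          * ∑' k : ℕ, ENNReal.ofReal ((w k)⁻¹) ^ 2 * P k r ^ 2 := lintegral_mono hpt
    _ = ENNReal.ofReal (1 - q)⁻¹
          * ∑' k : ℕ, ENNReal.ofReal ((w k)⁻¹) ^ 2 * ∫⁻ r, P k r ^ 2 := by
        rw [lintegral_const_mul' _ _ ENNReal.ofReal_ne_top,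
          lintegral_tsum (fun k => ((hPm k).pow_const 2).const_mul _ |>.aemeasurable)]
        congr 1
        refine tsum_congr fun k => ?_
        rw [lintegral_const_mul _ ((hPm k).pow_const 2)]
    _ ≤ ENNReal.ofReal (1 - q)⁻¹ * ∑' k : ℕ, ENNReal.ofReal C
          * ∫⁻ x in Set.Ioc ((2 : ℝ) ^ k) (2 * 2 ^ k),
            ENNReal.ofReal ((1 + x ^ 2) ^ s) * ‖G x‖ₑ ^ 2 := by
        exact mul_le_mul_right (ENNReal.tsum_le_tsum hk) _
    _ = _ := by
        rw [ENNReal.tsum_mul_left, ← lintegral_iUnion (fun _ => measurableSet_Ioc)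
          pairwise_disjoint_dyadic, iUnion_dyadic, ENNReal.ofReal_mul h1q.le, mul_assoc]

lemma lintegral_maxOsc_Ioi {a : ℝ} (ha : 0 < a) (ha1 : a ≠ 1) {s : ℝ} (hs : a / 4 < s) :
    ∃ C : ℝ, 0 < C ∧ ∀ G : ℝ → ℂ, Continuous G → IntegrableOn G (Set.Ioi 0) →
      ∫⁻ r, maxOsc a 1 (Set.Ioi 0) G r ^ 2
        ≤ ENNReal.ofReal C
          * ∫⁻ x in Set.Ioi (0 : ℝ), ENNReal.ofReal ((1 + x ^ 2) ^ s) * ‖G x‖ₑ ^ 2 := by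
  obtain ⟨C₁, hC₁, h₁⟩ := lintegral_maxOsc_low ha ha1
  obtain ⟨C₂, hC₂, h₂⟩ := lintegral_maxOsc_high ha ha1 hs
  refine ⟨2 * (C₁ + C₂), by positivity, fun G hG hGi => ?_⟩
  have hU : Set.Ioc (0 : ℝ) 1 ∪ Set.Ioi 1 = Set.Ioi 0 :=
    Set.Ioc_union_Ioi_eq_Ioi zero_le_one
  have hs1 : Set.Ioc (0 : ℝ) 1 ⊆ Set.Ioi 0 := Set.Ioc_subset_Ioi_self
  have hs2 : Set.Ioi (1 : ℝ) ⊆ Set.Ioi 0 := Set.Ioi_subset_Ioi zero_le_one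
  have hi1 : IntegrableOn G (Set.Ioc 0 1) := hGi.mono_set hs1
  have hi2 : IntegrableOn G (Set.Ioi 1) := hGi.mono_set hs2
  have hpt : ∀ r, maxOsc a 1 (Set.Ioi 0) G r
      ≤ maxOsc a 1 (Set.Ioc 0 1) G r + maxOsc a 1 (Set.Ioi 1) G r := by
    intro r
    refine iSup_le fun t => ?_
    have : osc a (Set.Ioi 0) G r t = osc a (Set.Ioc 0 1) G r t + osc a (Set.Ioi 1) G r t := by
      unfold osc
      rw [← hU]
      exact setIntegral_union (Set.disjoint_left.2 fun x hx hx' => not_lt.2 hx.2 hx')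
        measurableSet_Ioi (integrableOn_osc a hi1 r t) (integrableOn_osc a hi2 r t)
    rw [this]
    refine (enorm_add_le _ _).trans (add_le_add ?_ ?_)
    · exact le_iSup (fun t : Set.Icc (-1 : ℝ) 1 => ‖osc a (Set.Ioc 0 1) G r t‖ₑ) t
    · exact le_iSup (fun t : Set.Icc (-1 : ℝ) 1 => ‖osc a (Set.Ioi 1) G r t‖ₑ) t
  set E := ∫⁻ x in Set.Ioi (0 : ℝ), ENNReal.ofReal ((1 + x ^ 2) ^ s) * ‖G x‖ₑ ^ 2 with hE
  have hs0 : 0 ≤ s := by linarith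
  have hE1 : ∫⁻ x in Set.Ioc (0 : ℝ) 1, ‖G x‖ₑ ^ 2 ≤ E := by
    refine le_trans ?_ (lintegral_mono_set hs1)
    refine lintegral_mono fun x => ?_
    refine le_mul_of_one_le_left (by positivity) ?_
    rw [ENNReal.one_le_ofReal]
    exact Real.one_le_rpow (by nlinarith [sq_nonneg x]) hs0
  have hE2 : ∫⁻ x in Set.Ioi (1 : ℝ), ENNReal.ofReal ((1 + x ^ 2) ^ s) * ‖G x‖ₑ ^ 2 ≤ E :=
    lintegral_mono_set hs2
  calc ∫⁻ r, maxOsc a 1 (Set.Ioi 0) G r ^ 2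
      ≤ ∫⁻ r, 2 * (maxOsc a 1 (Set.Ioc 0 1) G r ^ 2 + maxOsc a 1 (Set.Ioi 1) G r ^ 2) :=
        lintegral_mono fun r => (pow_le_pow_left' (hpt r) 2).trans (ennreal_add_sq_le _ _)
    _ = 2 * ((∫⁻ r, maxOsc a 1 (Set.Ioc 0 1) G r ^ 2)
          + ∫⁻ r, maxOsc a 1 (Set.Ioi 1) G r ^ 2) := by
        rw [lintegral_const_mul' _ _ (by norm_num),
          lintegral_add_left ((measurable_maxOsc a 1 hi1).pow_const 2)]
    _ ≤ 2 * (ENNReal.ofReal C₁ * E + ENNReal.ofReal C₂ * E) := by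
        gcongr
        · exact (h₁ G hG).trans (by gcongr)
        · exact (h₂ G hG hi2).trans (by gcongr)
    _ = ENNReal.ofReal (2 * (C₁ + C₂)) * E := by
        rw [ENNReal.ofReal_mul (by norm_num), ENNReal.ofReal_add hC₁.le hC₂.le]
        norm_num
        ring

lemma lintegral_min_rpow_le {r : ℝ} (hr : 0 < r) :
    ∫⁻ ρ in Set.Ioi (0 : ℝ), ENNReal.ofReal (min 1 (1 / (r * ρ)) * ρ ^ (-(1/2) : ℝ))
      ≤ ENNReal.ofReal (4 * r ^ (-(1/2) : ℝ)) := by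
  set c := r⁻¹ with hc
  have hc0 : 0 < c := inv_pos.2 hr
  have hU : Set.Ioc (0 : ℝ) c ∪ Set.Ioi c = Set.Ioi 0 := Set.Ioc_union_Ioi_eq_Ioi hc0.le
  have hrc : r ^ (-(1/2) : ℝ) = c ^ (1/2 : ℝ) := by
    rw [hc, Real.inv_rpow hr.le, Real.rpow_neg hr.le]
  have h1 : ∫⁻ ρ in Set.Ioc (0 : ℝ) c, ENNReal.ofReal (min 1 (1 / (r * ρ)) * ρ ^ (-(1/2) : ℝ))
      ≤ ENNReal.ofReal (2 * c ^ (1/2 : ℝ)) := by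
    have hi : IntervalIntegrable (fun ρ : ℝ => ρ ^ (-(1/2) : ℝ)) volume 0 c :=
      intervalIntegral.intervalIntegrable_rpow' (by norm_num)
    rw [intervalIntegrable_iff_integrableOn_Ioc_of_le hc0.le] at hi
    calc _ ≤ ∫⁻ ρ in Set.Ioc (0 : ℝ) c, ENNReal.ofReal (ρ ^ (-(1/2) : ℝ)) := by
          refine setLIntegral_mono' measurableSet_Ioc fun ρ hρ => ?_
          have := hρ.1
          apply ENNReal.ofReal_le_ofReal
          exact mul_le_of_le_one_left (by positivity) (min_le_left _ _)
      _ = ENNReal.ofReal (∫ ρ in Set.Ioc (0 : ℝ) c, ρ ^ (-(1/2) : ℝ)) := by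
          rw [ofReal_integral_eq_lintegral_ofReal hi]
          refine (ae_restrict_iff' measurableSet_Ioc).2 (Filter.Eventually.of_forall fun ρ hρ => ?_)
          have := hρ.1
          simp only [Pi.zero_apply]
          positivity
      _ ≤ _ := by
          apply ENNReal.ofReal_le_ofReal
          rw [← intervalIntegral.integral_of_le hc0.le, integral_rpow (Or.inl (by norm_num))]
          norm_num
          linarith
  have h2 : ∫⁻ ρ in Set.Ioi c, ENNReal.ofReal (min 1 (1 / (r * ρ)) * ρ ^ (-(1/2) : ℝ))
      ≤ ENNReal.ofReal (2 * c ^ (1/2 : ℝ)) := by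
    have hi : IntegrableOn (fun ρ : ℝ => c * ρ ^ (-(3/2) : ℝ)) (Set.Ioi c) :=
      (integrableOn_Ioi_rpow_of_lt (by norm_num) hc0).const_mul c
    calc _ ≤ ∫⁻ ρ in Set.Ioi c, ENNReal.ofReal (c * ρ ^ (-(3/2) : ℝ)) := by
          refine setLIntegral_mono' measurableSet_Ioi fun ρ hρ => ?_
          have hρ0 : 0 < ρ := hc0.trans hρ
          apply ENNReal.ofReal_le_ofReal
          calc min 1 (1 / (r * ρ)) * ρ ^ (-(1/2) : ℝ) ≤ 1 / (r * ρ) * ρ ^ (-(1/2) : ℝ) := by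
                gcongr; exact min_le_right _ _
            _ = c * (ρ ^ (-1 : ℝ) * ρ ^ (-(1/2) : ℝ)) := by
                rw [hc, Real.rpow_neg_one]; field_simp
            _ = _ := by rw [← Real.rpow_add hρ0]; norm_num
      _ = ENNReal.ofReal (∫ ρ in Set.Ioi c, c * ρ ^ (-(3/2) : ℝ)) := by
          rw [ofReal_integral_eq_lintegral_ofReal hi]
          refine (ae_restrict_iff' measurableSet_Ioi).2 (Filter.Eventually.of_forall fun ρ hρ => ?_)
          have : 0 < ρ := hc0.trans hρ
          simp only [Pi.zero_apply]
          positivity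
      _ ≤ _ := by
          apply ENNReal.ofReal_le_ofReal
          rw [integral_const_mul, integral_Ioi_rpow_of_lt (by norm_num) hc0]
          have : c * c ^ (-(1/2) : ℝ) = c ^ (1/2 : ℝ) := by
            nth_rewrite 1 [← Real.rpow_one c]
            rw [← Real.rpow_add hc0]; norm_num
          norm_num at this ⊢
          linarith
  rw [← hU, lintegral_union measurableSet_Ioi
    (Set.disjoint_left.2 fun x hx hx' => not_lt.2 hx.2 hx'), hrc]
  refine (add_le_add h1 h2).trans (le_of_eq ?_)
  rw [← ENNReal.ofReal_add (by positivity) (by positivity)]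
  congr 1
  ring

lemma lintegral_hardy_le {g : ℝ → ℝ≥0∞} (hg : Measurable g) :
    ∫⁻ r in Set.Ioi (0 : ℝ), (∫⁻ ρ in Set.Ioi (0 : ℝ),
        ENNReal.ofReal (min 1 (1 / (r * ρ))) * g ρ) ^ 2
      ≤ 16 * ∫⁻ ρ in Set.Ioi (0 : ℝ), g ρ ^ 2 := by
  set K : ℝ → ℝ → ℝ := fun r ρ => min 1 (1 / (r * ρ)) with hK
  have hK0 : ∀ r ρ, 0 < r → 0 < ρ → 0 ≤ K r ρ := fun r ρ hr hρ => by
    simp only [hK]; positivity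
  have hKm : Measurable (fun q : ℝ × ℝ => K q.1 q.2) := by
    simp only [hK]; fun_prop
  have hstep : ∀ r : ℝ, 0 < r → (∫⁻ ρ in Set.Ioi (0 : ℝ), ENNReal.ofReal (K r ρ) * g ρ) ^ 2
      ≤ ENNReal.ofReal (4 * r ^ (-(1/2) : ℝ)) *
        ∫⁻ ρ in Set.Ioi (0 : ℝ), ENNReal.ofReal (K r ρ * ρ ^ (1/2 : ℝ)) * g ρ ^ 2 := by
    intro r hr
    have hm : Measurable (fun ρ => K r ρ) := hKm.comp (by fun_prop : Measurable fun ρ => (r, ρ))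
    have hcs := lintegral_mul_sq_le (μ := volume.restrict (Set.Ioi (0 : ℝ)))
      (f := fun ρ => ENNReal.ofReal (√(K r ρ) * ρ ^ (-(1/4) : ℝ)))
      (g := fun ρ => ENNReal.ofReal (√(K r ρ) * ρ ^ (1/4 : ℝ)) * g ρ)
      (by fun_prop) (by fun_prop)
    refine le_trans (le_of_eq ?_) (hcs.trans (mul_le_mul' ?_ (le_of_eq ?_)))
    · congr 1
      refine setLIntegral_congr_fun measurableSet_Ioi fun ρ hρ => ?_
      have hρ' : 0 < ρ := hρ
      rw [← mul_assoc, ← ENNReal.ofReal_mul (by positivity)]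
      congr 2
      calc K r ρ = (√(K r ρ) * √(K r ρ)) * (ρ ^ (-(1/4) : ℝ) * ρ ^ (1/4 : ℝ)) := by
            rw [Real.mul_self_sqrt (hK0 r ρ hr hρ), ← Real.rpow_add hρ']; norm_num
        _ = _ := by ring
    · refine le_trans (le_of_eq ?_) (lintegral_min_rpow_le hr)
      refine setLIntegral_congr_fun measurableSet_Ioi fun ρ hρ => ?_
      have hρ' : 0 < ρ := hρ
      rw [← ENNReal.ofReal_pow (by positivity), mul_pow, Real.sq_sqrt (hK0 r ρ hr hρ),
        ← Real.rpow_natCast (ρ ^ _), ← Real.rpow_mul hρ'.le]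
      norm_num [hK]
    · refine setLIntegral_congr_fun measurableSet_Ioi fun ρ hρ => ?_
      have hρ' : 0 < ρ := hρ
      rw [mul_pow, ← ENNReal.ofReal_pow (by positivity), mul_pow, Real.sq_sqrt (hK0 r ρ hr hρ),
        ← Real.rpow_natCast (ρ ^ _), ← Real.rpow_mul hρ'.le]
      norm_num
  calc _ ≤ ∫⁻ r in Set.Ioi (0 : ℝ), ENNReal.ofReal (4 * r ^ (-(1/2) : ℝ)) *
        ∫⁻ ρ in Set.Ioi (0 : ℝ), ENNReal.ofReal (K r ρ * ρ ^ (1/2 : ℝ)) * g ρ ^ 2 :=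
        setLIntegral_mono' measurableSet_Ioi fun r hr => hstep r hr
    _ = ∫⁻ r in Set.Ioi (0 : ℝ), ∫⁻ ρ in Set.Ioi (0 : ℝ), ENNReal.ofReal (4 * r ^ (-(1/2) : ℝ)) *
        (ENNReal.ofReal (K r ρ * ρ ^ (1/2 : ℝ)) * g ρ ^ 2) := by
        refine lintegral_congr fun r => ?_
        rw [lintegral_const_mul' _ _ ENNReal.ofReal_ne_top]
    _ = ∫⁻ ρ in Set.Ioi (0 : ℝ), ∫⁻ r in Set.Ioi (0 : ℝ), ENNReal.ofReal (4 * r ^ (-(1/2) : ℝ)) *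
        (ENNReal.ofReal (K r ρ * ρ ^ (1/2 : ℝ)) * g ρ ^ 2) := by
        refine lintegral_lintegral_swap ?_
        apply Measurable.aemeasurable
        fun_prop
    _ ≤ ∫⁻ ρ in Set.Ioi (0 : ℝ), 16 * g ρ ^ 2 := by
        refine setLIntegral_mono' measurableSet_Ioi fun ρ hρ => ?_
        have hρ' : 0 < ρ := hρ
        have hm : Measurable (fun r => K r ρ) := hKm.comp (by fun_prop : Measurable fun r => (r, ρ))
        calc _ = ∫⁻ r in Set.Ioi (0 : ℝ), (ENNReal.ofReal (4 * ρ ^ (1/2 : ℝ)) * g ρ ^ 2) *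
              ENNReal.ofReal (min 1 (1 / (ρ * r)) * r ^ (-(1/2) : ℝ)) := by
              refine setLIntegral_congr_fun measurableSet_Ioi fun r hr => ?_
              have hr' : 0 < r := hr
              have h0 := hK0 r ρ hr' hρ'
              have e1 : min 1 (1 / (ρ * r)) = K r ρ := by simp only [hK]; rw [mul_comm ρ r]
              rw [e1, ← mul_assoc, mul_right_comm _ (g ρ ^ 2),
                ← ENNReal.ofReal_mul (by positivity), ← ENNReal.ofReal_mul (by positivity)]
              congr 2
              ring
          _ = (ENNReal.ofReal (4 * ρ ^ (1/2 : ℝ)) * g ρ ^ 2) *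
              ∫⁻ r in Set.Ioi (0 : ℝ), ENNReal.ofReal (min 1 (1 / (ρ * r)) * r ^ (-(1/2) : ℝ)) := by
              rw [lintegral_const_mul]
              fun_prop
          _ ≤ (ENNReal.ofReal (4 * ρ ^ (1/2 : ℝ)) * g ρ ^ 2) *
              ENNReal.ofReal (4 * ρ ^ (-(1/2) : ℝ)) := by
              gcongr; exact lintegral_min_rpow_le hρ'
          _ = 16 * g ρ ^ 2 := by
              rw [mul_right_comm, ← ENNReal.ofReal_mul (by positivity)]
              congr 1
              have : ρ ^ (1/2 : ℝ) * ρ ^ (-(1/2) : ℝ) = 1 := by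
                rw [← Real.rpow_add hρ']; norm_num
              rw [show 4 * ρ ^ (1/2 : ℝ) * (4 * ρ ^ (-(1/2) : ℝ))
                = 16 * (ρ ^ (1/2 : ℝ) * ρ ^ (-(1/2) : ℝ)) by ring, this]
              norm_num
    _ = _ := by rw [lintegral_const_mul' _ _ (by norm_num)]

lemma exists_limit_of_norm_deriv_le {z z' : ℝ → ℂ} {K : ℝ} (hK : 0 ≤ K)
    (hz : ∀ u, 1 ≤ u → HasDerivAt z (z' u) u) (hb : ∀ u, 1 ≤ u → ‖z' u‖ ≤ K / u ^ 2) :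
    ∃ L : ℂ, ∀ u, 1 ≤ u → ‖z u - L‖ ≤ K / u := by
  have hinc : ∀ x y, 1 ≤ x → x ≤ y → ‖z y - z x‖ ≤ K / x := by
    intro x y hx hxy
    have hx0 : 0 < x := by linarith
    have hy0 : 0 < y := by linarith
    have h := image_norm_le_of_norm_deriv_right_le_deriv_boundary' (a := x) (b := y)
      (f := fun u => z u - z x) (f' := z') (B := fun u => K / x - K / u)
      (B' := fun u => K / u ^ 2) ?_ ?_ (by simp) ?_ ?_ ?_ ⟨hxy, le_rfl⟩
    · refine h.trans ?_
      have : 0 ≤ K / y := by positivity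
      linarith
    · intro u hu
      exact ((hz u (hx.trans hu.1)).continuousAt.sub continuousAt_const).continuousWithinAt
    · intro u hu
      exact ((hz u (hx.trans hu.1)).sub_const _).hasDerivWithinAt
    · intro u hu
      have : u ≠ 0 := by linarith [hu.1]
      exact ContinuousAt.continuousWithinAt (by fun_prop (disch := assumption))
    · intro u hu
      have hu0 : u ≠ 0 := by linarith [hu.1]
      have := ((hasDerivAt_inv hu0).const_mul K).const_sub (K / x)
      simp only [← div_eq_mul_inv] at this
      convert! this.hasDerivWithinAt using 1
      field_simp
    · intro u hu
      exact hb u (hx.trans hu.1)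
  have hcs : CauchySeq (fun n : ℕ => z (n + 1)) := by
    refine cauchySeq_of_le_tendsto_0' (fun n : ℕ => K / ((n : ℝ) + 1)) ?_ ?_
    · intro n m hnm
      rw [dist_comm, dist_eq_norm]
      have : (n : ℝ) ≤ m := by exact_mod_cast hnm
      exact hinc _ _ (by linarith [n.cast_nonneg (α := ℝ)]) (by linarith)
    · have := (tendsto_one_div_add_atTop_nhds_zero_nat (𝕜 := ℝ)).const_mul K
      simpa [div_eq_mul_inv] using this
  obtain ⟨L, hL⟩ := cauchySeq_tendsto_of_complete hcs
  refine ⟨L, fun u hu => ?_⟩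
  have ht : Filter.Tendsto (fun n : ℕ => ‖z (n + 1) - z u‖) Filter.atTop (nhds ‖L - z u‖) :=
    (hL.sub_const _).norm
  rw [norm_sub_rev]
  refine le_of_tendsto ht ?_
  obtain ⟨N, hN⟩ := exists_nat_ge u
  filter_upwards [Filter.eventually_ge_atTop N] with n hn
  have : (N : ℝ) ≤ n := by exact_mod_cast hn
  exact hinc u _ hu (by linarith)

lemma norm_bounded_of_ode {v v₁ : ℝ → ℂ} {q : ℝ}
    (hv : ∀ u, 1 ≤ u → HasDerivAt v (v₁ u) u)
    (hv₁ : ∀ u, 1 ≤ u → HasDerivAt v₁ (-v u + ((q / u ^ 2 : ℝ) : ℂ) * v u) u) :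
    ∃ M, 0 ≤ M ∧ ∀ u, 1 ≤ u → ‖v u‖ ≤ M := by
  set E : ℝ → ℝ := fun u => (‖v u‖ ^ 2 + ‖v₁ u‖ ^ 2) * Real.exp (|q| / u) with hE
  set E' : ℝ → ℝ := fun u => (2 * ⟪v u, v₁ u⟫_ℝ
      + 2 * ⟪v₁ u, -v u + ((q / u ^ 2 : ℝ) : ℂ) * v u⟫_ℝ) * Real.exp (|q| / u)
      + (‖v u‖ ^ 2 + ‖v₁ u‖ ^ 2) * (Real.exp (|q| / u) * (-|q| / u ^ 2)) with hE'
  have hd : ∀ u, 1 ≤ u → HasDerivAt E (E' u) u := by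
    intro u hu
    have hu0 : u ≠ 0 := by linarith
    have h1 : HasDerivAt (fun u : ℝ => |q| / u) (-|q| / u ^ 2) u := by
      have := (hasDerivAt_inv hu0).const_mul |q|
      simp only [← div_eq_mul_inv] at this
      convert! this using 1
      field_simp
    exact ((hv u hu).norm_sq.add (hv₁ u hu).norm_sq).mul h1.exp
  have hneg : ∀ u, 1 ≤ u → E' u ≤ 0 := by
    intro u hu
    have hu0 : 0 < u := by linarith
    have h1 : ⟪v₁ u, -v u + ((q / u ^ 2 : ℝ) : ℂ) * v u⟫_ℝ
        = -⟪v u, v₁ u⟫_ℝ + q / u ^ 2 * ⟪v u, v₁ u⟫_ℝ := by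
      rw [inner_add_right, inner_neg_right, ← Complex.real_smul, real_inner_smul_right,
        real_inner_comm]
    have h2 : |⟪v u, v₁ u⟫_ℝ| ≤ ‖v u‖ * ‖v₁ u‖ := abs_real_inner_le_norm _ _
    have h3 : q * ⟪v u, v₁ u⟫_ℝ ≤ |q| * (‖v u‖ * ‖v₁ u‖) := by
      refine (le_abs_self _).trans ?_
      rw [abs_mul]
      gcongr
    have h4 : E' u = Real.exp (|q| / u) / u ^ 2 *
        (2 * (q * ⟪v u, v₁ u⟫_ℝ) - |q| * (‖v u‖ ^ 2 + ‖v₁ u‖ ^ 2)) := by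
      simp only [hE']
      rw [h1]
      field_simp
      ring
    rw [h4]
    refine mul_nonpos_of_nonneg_of_nonpos (by positivity) ?_
    have h5 : |q| * (2 * (‖v u‖ * ‖v₁ u‖)) ≤ |q| * (‖v u‖ ^ 2 + ‖v₁ u‖ ^ 2) := by
      gcongr
      nlinarith [sq_nonneg (‖v u‖ - ‖v₁ u‖)]
    linarith
  have hanti : AntitoneOn E (Set.Ici 1) := by
    refine antitoneOn_of_deriv_nonpos (convex_Ici 1) ?_ ?_ ?_
    · exact fun u hu => (hd u hu).continuousAt.continuousWithinAt
    · intro u hu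
      rw [interior_Ici] at hu
      exact (hd u hu.le).differentiableAt.differentiableWithinAt
    · intro u hu
      rw [interior_Ici] at hu
      rw [(hd u hu.le).deriv]
      exact hneg u hu.le
  have hE1 : 0 ≤ E 1 := by simp only [hE]; positivity
  refine ⟨1 + E 1, by linarith, fun u hu => ?_⟩
  have h1 : E u ≤ E 1 := hanti (Set.mem_Ici.2 le_rfl) hu hu
  have h2 : ‖v u‖ ^ 2 ≤ E u := by
    simp only [hE]
    have : 1 ≤ Real.exp (|q| / u) := Real.one_le_exp (by positivity)
    nlinarith [sq_nonneg ‖v u‖, sq_nonneg ‖v₁ u‖]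
  nlinarith [sq_nonneg (‖v u‖ - 1)]

lemma hasDerivAt_cexp_mul_I (c : ℂ) (u : ℝ) :
    HasDerivAt (fun u : ℝ => Complex.exp (c * (u : ℂ))) (c * Complex.exp (c * (u : ℂ))) u := by
  have h := ((hasDerivAt_id (u : ℂ)).const_mul c).cexp.comp_ofReal
  simpa [mul_comm] using h

lemma exists_asymptotics_of_ode {v v₁ : ℝ → ℂ} {q : ℝ}
    (hv : ∀ u, 1 ≤ u → HasDerivAt v (v₁ u) u)
    (hv₁ : ∀ u, 1 ≤ u → HasDerivAt v₁ (-v u + ((q / u ^ 2 : ℝ) : ℂ) * v u) u) :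
    ∃ A A' : ℂ, ∃ K : ℝ, 0 ≤ K ∧ ∀ u : ℝ, 1 ≤ u →
      ‖v u - A * Complex.exp (Complex.I * (u : ℂ)) - A' * Complex.exp (-Complex.I * (u : ℂ))‖
        ≤ K / u := by
  obtain ⟨M, hM, hvM⟩ := norm_bounded_of_ode hv hv₁
  have hexp : ∀ u : ℝ, ‖Complex.exp (-Complex.I * (u : ℂ))‖ = 1 := by
    intro u
    have := norm_cexp_I_mul (-u)
    rwa [Complex.ofReal_neg, mul_neg, ← neg_mul] at this
  have hee : ∀ u : ℝ, Complex.exp (Complex.I * (u : ℂ)) * Complex.exp (-Complex.I * (u : ℂ)) = 1 := by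
    intro u
    rw [← Complex.exp_add]
    simp
  have hbd : ∀ u : ℝ, 1 ≤ u → ‖((q / u ^ 2 : ℝ) : ℂ) * v u‖ ≤ |q| * M / u ^ 2 := by
    intro u hu
    rw [norm_mul, Complex.norm_real, Real.norm_eq_abs, abs_div, abs_of_pos (by positivity : 0 < u ^ 2),
      div_mul_eq_mul_div]
    gcongr
    exact hvM u hu
  obtain ⟨L, hL⟩ := exists_limit_of_norm_deriv_le (K := |q| * M) (by positivity)
    (z := fun u => Complex.exp (-Complex.I * (u : ℂ)) * (v₁ u + Complex.I * v u))
    (z' := fun u => Complex.exp (-Complex.I * (u : ℂ)) * (((q / u ^ 2 : ℝ) : ℂ) * v u))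
    (fun u hu => by
      convert! (hasDerivAt_cexp_mul_I (-Complex.I) u).mul
        ((hv₁ u hu).add ((hv u hu).const_mul Complex.I)) using 1
      simp only [Pi.add_apply]
      linear_combination (v u * Complex.exp (-Complex.I * (u : ℂ))) * Complex.I_sq)
    (fun u hu => by rw [norm_mul, hexp, one_mul]; exact hbd u hu)
  obtain ⟨L', hL'⟩ := exists_limit_of_norm_deriv_le (K := |q| * M) (by positivity)
    (z := fun u => Complex.exp (Complex.I * (u : ℂ)) * (v₁ u - Complex.I * v u))
    (z' := fun u => Complex.exp (Complex.I * (u : ℂ)) * (((q / u ^ 2 : ℝ) : ℂ) * v u))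
    (fun u hu => by
      convert! (hasDerivAt_cexp_mul_I Complex.I u).mul
        ((hv₁ u hu).sub ((hv u hu).const_mul Complex.I)) using 1
      simp only [Pi.sub_apply]
      linear_combination (v u * Complex.exp (Complex.I * (u : ℂ))) * Complex.I_sq)
    (fun u hu => by rw [norm_mul, norm_cexp_I_mul, one_mul]; exact hbd u hu)
  refine ⟨-Complex.I / 2 * L, Complex.I / 2 * L', |q| * M, by positivity, fun u hu => ?_⟩
  have h1 := hL u hu
  have h2 := hL' u hu
  set e := Complex.exp (Complex.I * (u : ℂ)) with he
  set e' := Complex.exp (-Complex.I * (u : ℂ)) with he'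
  have hid : v u - -Complex.I / 2 * L * e - Complex.I / 2 * L' * e'
      = -Complex.I / 2 * (e * (e' * (v₁ u + Complex.I * v u) - L))
        + Complex.I / 2 * (e' * (e * (v₁ u - Complex.I * v u) - L')) := by
    have := hee u
    linear_combination (v u * (Complex.I ^ 2)) * this + v u * Complex.I_sq
  rw [hid]
  have hI : ‖-Complex.I / 2‖ = 1 / 2 := by simp
  have hI' : ‖Complex.I / 2‖ = 1 / 2 := by simp
  refine (norm_add_le _ _).trans ?_
  rw [norm_mul, norm_mul, norm_mul (Complex.I / 2), norm_mul e', hI, hI', he, norm_cexp_I_mul,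
    he', hexp]
  linarith

/-- `∫₀^π (i cos θ)^j e^{iu cos θ} sin^m θ dθ`, the `j`-th derivative in `u` of the Poisson
integral for Bessel functions. -/
def bes (m j : ℕ) (u : ℝ) : ℂ :=
  ∫ θ in (0 : ℝ)..π, (Complex.I * (Real.cos θ : ℂ)) ^ j *
    (Complex.exp (Complex.I * ((u * Real.cos θ : ℝ) : ℂ)) * ((Real.sin θ ^ m : ℝ) : ℂ))

lemma norm_bes_integrand_le (m j : ℕ) (u θ : ℝ) :
    ‖(Complex.I * (Real.cos θ : ℂ)) ^ j *
    (Complex.exp (Complex.I * ((u * Real.cos θ : ℝ) : ℂ)) * ((Real.sin θ ^ m : ℝ) : ℂ))‖ ≤ 1 := by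
  rw [norm_mul, norm_mul, norm_pow, norm_mul, Complex.norm_I, norm_cexp_I_mul, Complex.norm_real,
    Complex.norm_real, norm_pow, one_mul, one_mul, Real.norm_eq_abs, Real.norm_eq_abs]
  exact mul_le_one₀ (pow_le_one₀ (abs_nonneg _) (Real.abs_cos_le_one θ)) (by positivity)
    (pow_le_one₀ (abs_nonneg _) (Real.abs_sin_le_one θ))

lemma norm_bes_le (m j : ℕ) (u : ℝ) : ‖bes m j u‖ ≤ π := by
  have h := intervalIntegral.norm_integral_le_of_norm_le_const (a := 0) (b := π) (C := 1)
    (fun θ _ => norm_bes_integrand_le m j u θ)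
  simpa [bes, abs_of_pos Real.pi_pos] using h

lemma hasDerivAt_bes (m j : ℕ) (u : ℝ) : HasDerivAt (bes m j) (bes m (j + 1) u) u := by
  unfold bes
  refine (intervalIntegral.hasDerivAt_integral_of_dominated_loc_of_deriv_le (bound := fun _ => 1)
    (s := Set.univ)
    (F' := fun u θ => (Complex.I * (Real.cos θ : ℂ)) ^ (j + 1) *
    (Complex.exp (Complex.I * ((u * Real.cos θ : ℝ) : ℂ)) * ((Real.sin θ ^ m : ℝ) : ℂ)))
    Filter.univ_mem ?_ ?_ ?_ ?_ ?_ ?_).2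
  · refine Filter.Eventually.of_forall fun u => ?_
    exact Continuous.aestronglyMeasurable (by fun_prop)
  · exact Continuous.intervalIntegrable (by fun_prop) _ _
  · exact Continuous.aestronglyMeasurable (by fun_prop)
  · exact Filter.Eventually.of_forall fun θ _ u _ => norm_bes_integrand_le m (j + 1) u θ
  · exact intervalIntegrable_const
  · refine Filter.Eventually.of_forall fun θ _ u _ => ?_
    have h1 : HasDerivAt (fun u : ℝ => u * Real.cos θ) (Real.cos θ) u := by
      simpa using (hasDerivAt_id u).mul_const (Real.cos θ)
    have h2 := (((hasDerivAt_cexp_phase h1).mul_const ((Real.sin θ ^ m : ℝ) : ℂ)).const_mul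
      ((Complex.I * (Real.cos θ : ℂ)) ^ j))
    convert! h2 using 1
    ring

lemma bes_ode (m : ℕ) (u : ℝ) :
    (u : ℂ) * (bes m 0 u + bes m 2 u) + ((m : ℂ) + 1) * bes m 1 u = 0 := by
  have hint : ∀ j, IntervalIntegrable (fun θ : ℝ => (Complex.I * (Real.cos θ : ℂ)) ^ j *
    (Complex.exp (Complex.I * ((u * Real.cos θ : ℝ) : ℂ)) * ((Real.sin θ ^ m : ℝ) : ℂ)))
    volume 0 π := fun j => Continuous.intervalIntegrable (by fun_prop) _ _
  have hd : ∀ θ : ℝ, HasDerivAt (fun θ : ℝ => Complex.I *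
      (Complex.exp (Complex.I * ((u * Real.cos θ : ℝ) : ℂ)) * ((Real.sin θ ^ (m + 1) : ℝ) : ℂ)))
      ((u : ℂ) * ((Complex.I * (Real.cos θ : ℂ)) ^ 0 *
    (Complex.exp (Complex.I * ((u * Real.cos θ : ℝ) : ℂ)) * ((Real.sin θ ^ m : ℝ) : ℂ))
      + (Complex.I * (Real.cos θ : ℂ)) ^ 2 *
    (Complex.exp (Complex.I * ((u * Real.cos θ : ℝ) : ℂ)) * ((Real.sin θ ^ m : ℝ) : ℂ)))
    + ((m : ℂ) + 1) * ((Complex.I * (Real.cos θ : ℂ)) ^ 1 *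
    (Complex.exp (Complex.I * ((u * Real.cos θ : ℝ) : ℂ)) * ((Real.sin θ ^ m : ℝ) : ℂ)))) θ := by
    intro θ
    have h1 : HasDerivAt (fun θ : ℝ => u * Real.cos θ) (u * -Real.sin θ) θ :=
      (Real.hasDerivAt_cos θ).const_mul u
    have h2 := ((Real.hasDerivAt_sin θ).pow (m + 1)).ofReal_comp
    have h3 := ((hasDerivAt_cexp_phase h1).mul h2).const_mul Complex.I
    convert! h3 using 1
    have hs : ((Real.sin θ : ℝ) : ℂ) ^ 2 = 1 - ((Real.cos θ : ℝ) : ℂ) ^ 2 := by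
      have := Real.sin_sq θ
      exact_mod_cast this
    rw [Pi.pow_apply]
    push_cast at hs ⊢
    linear_combination ((u : ℂ) * Complex.exp (Complex.I * ((u : ℂ) * Complex.cos (θ : ℂ))) *
      Complex.sin (θ : ℂ) ^ m) * 
      ((Complex.cos (θ : ℂ) ^ 2 + Complex.sin (θ : ℂ) ^ 2) * Complex.I_sq - hs)
  have h := intervalIntegral.integral_eq_sub_of_hasDerivAt (a := 0) (b := π)
    (fun θ _ => hd θ) (((hint 0).add (hint 2)).const_mul _ |>.add ((hint 1).const_mul _))
  rw [intervalIntegral.integral_add (((hint 0).add (hint 2)).const_mul _) ((hint 1).const_mul _),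
    intervalIntegral.integral_const_mul, intervalIntegral.integral_const_mul,
    intervalIntegral.integral_add (hint 0) (hint 2)] at h
  simpa [bes] using h

lemma exists_bes_asymptotics (m : ℕ) :
    ∃ A A' : ℂ, ∃ K : ℝ, 0 ≤ K ∧ ∀ u : ℝ, 0 < u →
      ‖((u ^ (((m : ℝ) + 1) / 2) : ℝ) : ℂ) * bes m 0 u - A * Complex.exp (Complex.I * (u : ℂ))
        - A' * Complex.exp (-Complex.I * (u : ℂ))‖ ≤ K * min 1 (1 / u) := by
  set p : ℝ := ((m : ℝ) + 1) / 2 with hp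
  have hp0 : 0 < p := by positivity
  have hpow : ∀ (u : ℝ) (k : ℝ), 0 < u →
      HasDerivAt (fun u : ℝ => ((u ^ k : ℝ) : ℂ)) ((k * u ^ (k - 1) : ℝ) : ℂ) u := fun u k hu =>
    (Real.hasDerivAt_rpow_const (Or.inl hu.ne')).ofReal_comp
  obtain ⟨A, A', K, hK, h⟩ := exists_asymptotics_of_ode (q := p * (p - 1))
    (v := fun u => ((u ^ p : ℝ) : ℂ) * bes m 0 u)
    (v₁ := fun u => ((p * u ^ (p - 1) : ℝ) : ℂ) * bes m 0 u + ((u ^ p : ℝ) : ℂ) * bes m 1 u)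
    (fun u hu => (hpow u p (by linarith)).mul (hasDerivAt_bes m 0 u))
    (fun u hu => by
      have hu0 : 0 < u := by linarith
      have h1 := ((hpow u (p - 1) hu0).const_mul (p : ℂ)).mul (hasDerivAt_bes m 0 u)
      have h2 := (hpow u p hu0).mul (hasDerivAt_bes m 1 u)
      convert! h1.add h2 using 1
      · ext u; simp
      have e1 : u ^ (p - 1) = u ^ p / u := Real.rpow_sub_one hu0.ne' p
      have e2 : u ^ (p - 1 - 1) = u ^ p / u ^ 2 := by
        rw [Real.rpow_sub_one hu0.ne', e1, div_div, sq]
      have hode := bes_ode m u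
      have hm : (m : ℂ) + 1 = 2 * (p : ℂ) := by
        rw [hp]; push_cast; ring
      rw [hm] at hode
      have hne : (u : ℂ) ≠ 0 := by exact_mod_cast hu0.ne'
      rw [e1, e2]
      push_cast
      field_simp
      linear_combination (-((u ^ p : ℝ) : ℂ) * (u : ℂ)) * hode)
  refine ⟨A, A', K + (π + ‖A‖ + ‖A'‖), by positivity, fun u hu => ?_⟩
  rcases le_total u 1 with h1 | h1
  · rw [min_eq_left (by rw [le_div_iff₀ hu]; linarith)]
    have hexp : ‖Complex.exp (-Complex.I * (u : ℂ))‖ = 1 := by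
      have := norm_cexp_I_mul (-u)
      rwa [Complex.ofReal_neg, mul_neg, ← neg_mul] at this
    have hb : ‖((u ^ p : ℝ) : ℂ) * bes m 0 u‖ ≤ π := by
      rw [norm_mul, Complex.norm_real, Real.norm_of_nonneg (by positivity)]
      calc _ ≤ 1 * π := by
            gcongr
            · exact Real.rpow_le_one hu.le h1 hp0.le
            · exact norm_bes_le m 0 u
        _ = π := one_mul _
    refine (norm_sub_le _ _).trans ?_
    have h2 := norm_sub_le (((u ^ p : ℝ) : ℂ) * bes m 0 u) (A * Complex.exp (Complex.I * (u : ℂ)))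
    rw [norm_mul A, norm_cexp_I_mul] at h2
    rw [norm_mul A', hexp]
    linarith
  · rw [min_eq_right (by rw [div_le_one hu]; exact h1)]
    refine (h u h1).trans ?_
    rw [← mul_one_div]
    have : 0 ≤ π + ‖A‖ + ‖A'‖ := by positivity
    gcongr
    linarith

lemma integrable_prod_of_decay (m : ℕ) {h : ℝ → ℂ} (hc : Continuous h) {C : ℝ}
    (hC : ∀ ρ, 0 ≤ ρ → ‖h ρ‖ ≤ C * (1 + ρ) ^ (-((m : ℝ) + 4))) (r : ℝ) :
    Integrable (fun z : ℝ × ℝ => Set.indicator {z : ℝ × ℝ | 0 < z.2} (fun z =>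
      ((z.2 ^ m : ℝ) : ℂ) * (Complex.exp (Complex.I * ((r * z.1 : ℝ) : ℂ))
        * h √(z.1 ^ 2 + z.2 ^ 2))) z) := by
  have hj : Integrable (fun x : ℝ => (1 + ‖x‖) ^ (-(2 : ℝ))) :=
    integrable_one_add_norm (by simp)
  have hC0 : 0 ≤ C := by
    have := (norm_nonneg _).trans (hC 0 le_rfl)
    simpa using this
  refine ((hj.mul_prod hj).const_mul C).mono' ?_ ?_
  · apply Measurable.aestronglyMeasurable
    refine Measurable.indicator ?_ (measurableSet_lt measurable_const measurable_snd)
    fun_prop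
  · refine Filter.Eventually.of_forall fun ⟨p, q⟩ => ?_
    by_cases hq : 0 < q
    · rw [Set.indicator_of_mem (by exact hq)]
      simp only
      rw [norm_mul, norm_mul, norm_cexp_I_mul, one_mul, Complex.norm_real,
        Real.norm_of_nonneg (by positivity), Real.norm_of_nonneg hq.le, Real.norm_eq_abs]
      set ρ := √(p ^ 2 + q ^ 2) with hρ
      have hρ0 : 0 ≤ ρ := Real.sqrt_nonneg _
      have h1 : |p| ≤ ρ := Real.abs_le_sqrt (by nlinarith [sq_nonneg q])
      have h2 : q ≤ ρ := Real.le_sqrt_of_sq_le (by nlinarith [sq_nonneg p])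
      have e1 : (1 + ρ) ^ (-((m : ℝ) + 4))
          = ((1 + ρ) ^ m)⁻¹ * ((1 + ρ) ^ (-(2:ℝ)) * (1 + ρ) ^ (-(2:ℝ))) := by
        rw [← Real.rpow_natCast, ← Real.rpow_neg (by positivity), ← Real.rpow_add (by positivity),
          ← Real.rpow_add (by positivity)]
        congr 1; ring
      have e2 : q ^ m * ((1 + ρ) ^ m)⁻¹ ≤ 1 := by
        rw [← div_eq_mul_inv, div_le_one (by positivity)]
        gcongr
        linarith
      have e3 : (1 + ρ) ^ (-(2:ℝ)) ≤ (1 + |p|) ^ (-(2:ℝ)) :=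
        Real.rpow_le_rpow_of_nonpos (by positivity) (by linarith) (by norm_num)
      have e4 : (1 + ρ) ^ (-(2:ℝ)) ≤ (1 + q) ^ (-(2:ℝ)) :=
        Real.rpow_le_rpow_of_nonpos (by positivity) (by linarith) (by norm_num)
      calc q ^ m * ‖h ρ‖ ≤ q ^ m * (C * (1 + ρ) ^ (-((m : ℝ) + 4))) := by
            gcongr; exact hC ρ hρ0
        _ = (q ^ m * ((1 + ρ) ^ m)⁻¹) * (C * ((1 + ρ) ^ (-(2:ℝ)) * (1 + ρ) ^ (-(2:ℝ)))) := by
            rw [e1]; ring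
        _ ≤ 1 * (C * ((1 + |p|) ^ (-(2:ℝ)) * (1 + q) ^ (-(2:ℝ)))) := by gcongr
        _ = _ := one_mul _
    · rw [Set.indicator_of_notMem (by exact hq), norm_zero]
      positivity

lemma integrableOn_bes_prod (m : ℕ) {h : ℝ → ℂ} (hc : Continuous h) {C : ℝ}
    (hC : ∀ ρ, 0 ≤ ρ → ‖h ρ‖ ≤ C * (1 + ρ) ^ (-((m : ℝ) + 4))) (r : ℝ) :
    IntegrableOn (fun z : ℝ × ℝ => (h z.1 * ((z.1 ^ (m + 1) : ℝ) : ℂ)) *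
      (Complex.exp (Complex.I * ((r * z.1 * Real.cos z.2 : ℝ) : ℂ)) *
        ((Real.sin z.2 ^ m : ℝ) : ℂ)))
      (Set.Ioi 0 ×ˢ Set.Ioo 0 π) := by
  have hj : Integrable (fun x : ℝ => (1 + ‖x‖) ^ (-(2 : ℝ))) :=
    integrable_one_add_norm (by simp)
  have hC0 : 0 ≤ C := by
    have := (norm_nonneg _).trans (hC 0 le_rfl)
    simpa using this
  have h1 : Integrable (fun z : ℝ × ℝ => C * ((1 + ‖z.1‖) ^ (-(2 : ℝ)) * 1))
      ((volume.restrict (Set.Ioi 0)).prod (volume.restrict (Set.Ioo 0 π))) :=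
    ((hj.integrableOn (s := Set.Ioi 0)).mul_prod (integrable_const (1 : ℝ))).const_mul C
  unfold IntegrableOn
  rw [Measure.volume_eq_prod, ← Measure.prod_restrict]
  refine h1.mono' ?_ ?_
  · exact Continuous.aestronglyMeasurable (by fun_prop)
  · rw [Measure.prod_restrict]
    refine (ae_restrict_iff' (measurableSet_Ioi.prod measurableSet_Ioo)).2
      (Filter.Eventually.of_forall fun ⟨ρ, θ⟩ hz => ?_)
    have hρ : 0 < ρ := hz.1
    simp only
    rw [norm_mul, norm_mul, norm_mul, norm_cexp_I_mul, one_mul, Complex.norm_real,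
      Complex.norm_real, Real.norm_of_nonneg hρ.le, Real.norm_of_nonneg (by positivity), mul_one,
      norm_pow, Real.norm_eq_abs]
    have e1 : (1 + ρ) ^ (-((m : ℝ) + 4)) ≤ ((1 + ρ) ^ (m + 1))⁻¹ * (1 + ρ) ^ (-(2:ℝ)) := by
      rw [← Real.rpow_natCast, ← Real.rpow_neg (by positivity), ← Real.rpow_add (by positivity)]
      apply Real.rpow_le_rpow_of_exponent_le (by linarith)
      push_cast
      linarith
    have e2 : ρ ^ (m + 1) * ((1 + ρ) ^ (m + 1))⁻¹ ≤ 1 := by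
      rw [← div_eq_mul_inv, div_le_one (by positivity)]
      gcongr
      linarith
    calc ‖h ρ‖ * ρ ^ (m + 1) * |Real.sin θ| ^ m ≤ ‖h ρ‖ * ρ ^ (m + 1) * 1 := by
          gcongr
          exact pow_le_one₀ (abs_nonneg _) (Real.abs_sin_le_one θ)
      _ ≤ (C * (((1 + ρ) ^ (m + 1))⁻¹ * (1 + ρ) ^ (-(2:ℝ)))) * ρ ^ (m + 1) := by
          rw [mul_one]
          gcongr
          exact (hC ρ hρ.le).trans (by gcongr)
      _ = (ρ ^ (m + 1) * ((1 + ρ) ^ (m + 1))⁻¹) * (C * (1 + ρ) ^ (-(2:ℝ))) := by ring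
      _ ≤ 1 * (C * (1 + ρ) ^ (-(2:ℝ))) := by gcongr
      _ = _ := one_mul _

lemma integral_halfplane_polar (m : ℕ) {h : ℝ → ℂ} (hc : Continuous h) {C : ℝ}
    (hC : ∀ ρ, 0 ≤ ρ → ‖h ρ‖ ≤ C * (1 + ρ) ^ (-((m : ℝ) + 4))) (r : ℝ) :
    ∫ p : ℝ, ∫ q in Set.Ioi (0 : ℝ), ((q ^ m : ℝ) : ℂ) *
        (Complex.exp (Complex.I * ((r * p : ℝ) : ℂ)) * h √(p ^ 2 + q ^ 2))
      = ∫ ρ in Set.Ioi (0 : ℝ), bes m 0 (r * ρ) * (h ρ * ((ρ ^ (m + 1) : ℝ) : ℂ)) := by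
  have hi := integrable_prod_of_decay m hc hC r
  set Φ : ℝ × ℝ → ℂ := fun z => Set.indicator {z : ℝ × ℝ | 0 < z.2} (fun z =>
      ((z.2 ^ m : ℝ) : ℂ) * (Complex.exp (Complex.I * ((r * z.1 : ℝ) : ℂ))
        * h √(z.1 ^ 2 + z.2 ^ 2))) z with hΦ
  have h1 : ∀ p : ℝ, ∫ q in Set.Ioi (0 : ℝ), ((q ^ m : ℝ) : ℂ) *
        (Complex.exp (Complex.I * ((r * p : ℝ) : ℂ)) * h √(p ^ 2 + q ^ 2)) = ∫ q, Φ (p, q) := by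
    intro p
    rw [← integral_indicator measurableSet_Ioi]
    rfl
  simp_rw [h1]
  have h2 : ∫ p, ∫ q, Φ (p, q) = ∫ z, Φ z := (integral_prod Φ hi).symm
  rw [h2, ← integral_comp_polarCoord_symm, polarCoord_target]
  have hsub : Set.Ioi (0 : ℝ) ×ˢ Set.Ioo 0 π ⊆ Set.Ioi (0 : ℝ) ×ˢ Set.Ioo (-π) π :=
    Set.prod_mono le_rfl (Set.Ioo_subset_Ioo_left (by linarith [Real.pi_pos]))
  rw [setIntegral_eq_of_subset_of_forall_sdiff_eq_zero
    (measurableSet_Ioi.prod measurableSet_Ioo) hsub ?_]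
  · have h3 : ∫ z in Set.Ioi (0 : ℝ) ×ˢ Set.Ioo 0 π, z.1 • Φ (polarCoord.symm z)
        = ∫ z in Set.Ioi (0 : ℝ) ×ˢ Set.Ioo 0 π, (h z.1 * ((z.1 ^ (m + 1) : ℝ) : ℂ)) *
      (Complex.exp (Complex.I * ((r * z.1 * Real.cos z.2 : ℝ) : ℂ)) *
        ((Real.sin z.2 ^ m : ℝ) : ℂ)) := by
      refine setIntegral_congr_fun (measurableSet_Ioi.prod measurableSet_Ioo) fun ⟨ρ, θ⟩ hz => ?_
      have hρ : 0 < ρ := hz.1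
      have hs : 0 < Real.sin θ := Real.sin_pos_of_pos_of_lt_pi hz.2.1 hz.2.2
      have hsq : √((ρ * Real.cos θ) ^ 2 + (ρ * Real.sin θ) ^ 2) = ρ := by
        rw [show (ρ * Real.cos θ) ^ 2 + (ρ * Real.sin θ) ^ 2 = ρ ^ 2 by
          linear_combination ρ ^ 2 * Real.sin_sq_add_cos_sq θ, Real.sqrt_sq hρ.le]
      simp only [hΦ, polarCoord_symm_apply]
      rw [Set.indicator_of_mem (by exact mul_pos hρ hs), hsq, Complex.real_smul]
      rw [← mul_assoc r]
      push_cast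
      ring
    rw [h3, Measure.volume_eq_prod, setIntegral_prod _ (integrableOn_bes_prod m hc hC r)]
    refine setIntegral_congr_fun measurableSet_Ioi fun ρ _ => ?_
    simp only [bes]
    rw [intervalIntegral.integral_of_le Real.pi_pos.le, integral_Ioc_eq_integral_Ioo,
      integral_const_mul, mul_comm]
    simp
  · rintro ⟨ρ, θ⟩ ⟨⟨hρ, hθ⟩, hn⟩
    have hρ' : 0 < ρ := hρ
    have hθ0 : θ ≤ 0 := by
      by_contra! h0
      exact hn ⟨hρ, h0, hθ.2⟩
    have hs : Real.sin θ ≤ 0 := Real.sin_nonpos_of_nonpos_of_neg_pi_le hθ0 hθ.1.le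
    simp only [hΦ, polarCoord_symm_apply]
    rw [Set.indicator_of_notMem, smul_zero]
    simp only [Set.mem_ofPred_eq, not_lt]
    exact mul_nonpos_of_nonneg_of_nonpos hρ'.le hs

lemma integral_euclideanSpace_succ {k : ℕ} {f : EuclideanSpace ℝ (Fin (k + 1)) → ℂ}
    (hf : Integrable f) :
    ∫ ξ, f ξ = ∫ p : ℝ, ∫ η : EuclideanSpace ℝ (Fin k),
      f (WithLp.toLp 2 (Fin.cons p η.ofLp)) := by
  set e := (MeasurableEquiv.piFinSuccAbove (fun _ : Fin (k + 1) => ℝ) 0).symm with he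
  have hmp : MeasurePreserving e := 
    (volume_preserving_piFinSuccAbove (fun _ : Fin (k + 1) => ℝ) 0).symm
  have hL := PiLp.volume_preserving_toLp (Fin (k + 1))
  have hcomp := hL.comp hmp
  have hemb : MeasurableEmbedding (WithLp.toLp 2 ∘ e : ℝ × (Fin k → ℝ) → _) :=
    (MeasurableEquiv.toLp 2 (Fin (k + 1) → ℝ)).measurableEmbedding.comp e.measurableEmbedding
  have hi : Integrable (fun z : ℝ × (Fin k → ℝ) => f (WithLp.toLp 2 (e z))) :=
    (hcomp.integrable_comp_emb hemb).2 hf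
  have h1 : ∫ ξ, f ξ = ∫ z : ℝ × (Fin k → ℝ), f (WithLp.toLp 2 (e z)) :=
    (hcomp.integral_comp hemb f).symm
  rw [h1, Measure.volume_eq_prod, integral_prod _ hi]
  congr 1
  ext p
  rw [← (PiLp.volume_preserving_ofLp (Fin k)).integral_comp
    (MeasurableEquiv.toLp 2 (Fin k → ℝ)).symm.measurableEmbedding]
  congr 1
  ext η
  have h2 : e (p, η.ofLp) = Fin.cons p η.ofLp := Fin.insertNth_zero' p η.ofLp
  rw [h2]

lemma norm_toLp_cons {k : ℕ} (p : ℝ) (η : EuclideanSpace ℝ (Fin k)) :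
    ‖(WithLp.toLp 2 (Fin.cons p η.ofLp) : EuclideanSpace ℝ (Fin (k + 1)))‖
      = √(p ^ 2 + ‖η‖ ^ 2) := by
  rw [EuclideanSpace.norm_eq, EuclideanSpace.norm_eq, Real.sq_sqrt (by positivity),
    Fin.sum_univ_succ]
  simp

lemma exists_isometry_map {k : ℕ} {x y : EuclideanSpace ℝ (Fin k)} (h : ‖x‖ = ‖y‖) :
    ∃ T : EuclideanSpace ℝ (Fin k) ≃ₗᵢ[ℝ] EuclideanSpace ℝ (Fin k), T x = y :=
  ⟨_, Submodule.reflection_sub h⟩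

lemma integrable_radial (m : ℕ) {h : ℝ → ℂ} (hc : Continuous h) {C : ℝ}
    (hC : ∀ ρ, 0 ≤ ρ → ‖h ρ‖ ≤ C * (1 + ρ) ^ (-((m : ℝ) + 4)))
    (x : EuclideanSpace ℝ (Fin (m + 2))) :
    Integrable (fun ξ : EuclideanSpace ℝ (Fin (m + 2)) =>
      Complex.exp (Complex.I * ((⟪x, ξ⟫_ℝ : ℝ) : ℂ)) * h ‖ξ‖) := by
  have hj : Integrable (fun ξ : EuclideanSpace ℝ (Fin (m + 2)) =>
      (1 + ‖ξ‖) ^ (-((m : ℝ) + 4))) :=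
    integrable_one_add_norm (by rw [finrank_euclideanSpace_fin]; push_cast; linarith)
  refine (hj.const_mul C).mono' ?_ ?_
  · exact Continuous.aestronglyMeasurable (by fun_prop)
  · refine Filter.Eventually.of_forall fun ξ => ?_
    rw [norm_mul, norm_cexp_I_mul, one_mul]
    exact hC _ (norm_nonneg _)

lemma integral_exp_inner_radial (m : ℕ) :
    ∃ c : ℝ, 0 ≤ c ∧ ∀ h : ℝ → ℂ, Continuous h → ∀ C : ℝ,
      (∀ ρ, 0 ≤ ρ → ‖h ρ‖ ≤ C * (1 + ρ) ^ (-((m : ℝ) + 4))) →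
      ∀ x : EuclideanSpace ℝ (Fin (m + 2)),
        ∫ ξ : EuclideanSpace ℝ (Fin (m + 2)), Complex.exp (Complex.I * ((⟪x, ξ⟫_ℝ : ℝ) : ℂ)) * h ‖ξ‖
          = (c : ℂ) * ∫ ρ in Set.Ioi (0 : ℝ),
            bes m 0 (‖x‖ * ρ) * (h ρ * ((ρ ^ (m + 1) : ℝ) : ℂ)) := by
  refine ⟨((m : ℝ) + 1) * (volume : Measure (EuclideanSpace ℝ (Fin (m + 1)))).real
    (Metric.ball 0 1), by positivity, fun h hc C hC x => ?_⟩
  set x₀ : EuclideanSpace ℝ (Fin (m + 2)) := EuclideanSpace.single 0 ‖x‖ with hx₀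
  have hn : ‖x‖ = ‖x₀‖ := by simp [hx₀]
  obtain ⟨T, hT⟩ := exists_isometry_map hn
  have h1 : ∫ ξ : EuclideanSpace ℝ (Fin (m + 2)),
        Complex.exp (Complex.I * ((⟪x, ξ⟫_ℝ : ℝ) : ℂ)) * h ‖ξ‖
      = ∫ ξ : EuclideanSpace ℝ (Fin (m + 2)),
        Complex.exp (Complex.I * ((⟪x₀, ξ⟫_ℝ : ℝ) : ℂ)) * h ‖ξ‖ := by
    rw [← T.measurePreserving.integral_comp T.toHomeomorph.measurableEmbedding
      (fun ξ => Complex.exp (Complex.I * ((⟪x₀, ξ⟫_ℝ : ℝ) : ℂ)) * h ‖ξ‖)]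
    congr 1
    ext ξ
    rw [← hT, T.inner_map_map, T.norm_map]
  rw [h1, integral_euclideanSpace_succ (integrable_radial m hc hC x₀), ← integral_halfplane_polar m
    hc hC, ← integral_const_mul]
  congr 1
  ext p
  have h2 : ∀ η : EuclideanSpace ℝ (Fin (m + 1)),
      ⟪x₀, (WithLp.toLp 2 (Fin.cons p η.ofLp) : EuclideanSpace ℝ (Fin (m + 2)))⟫_ℝ = ‖x‖ * p := by
    intro η
    rw [hx₀, EuclideanSpace.inner_single_left]
    simp
  simp_rw [h2, norm_toLp_cons]
  rw [integral_fun_norm_addHaar volume (fun q => Complex.exp (Complex.I * ((‖x‖ * p : ℝ) : ℂ)) *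
    h √(p ^ 2 + q ^ 2)), finrank_euclideanSpace_fin]
  simp only [Nat.add_sub_cancel, nsmul_eq_mul, Complex.real_smul]
  push_cast
  ring

lemma FT_radial {n : ℕ} {f : EuclideanSpace ℝ (Fin n) → ℂ}
    (hf : ∀ x y : EuclideanSpace ℝ (Fin n), ‖x‖ = ‖y‖ → f x = f y)
    {ξ η : EuclideanSpace ℝ (Fin n)} (h : ‖ξ‖ = ‖η‖) : FT n f ξ = FT n f η := by
  obtain ⟨T, hT⟩ := exists_isometry_map h
  unfold FT
  rw [← T.measurePreserving.integral_comp T.toHomeomorph.measurableEmbedding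
    (fun x => Complex.exp (-(Complex.I * ((⟪x, η⟫_ℝ : ℝ) : ℂ))) * f x)]
  congr 1
  ext x
  rw [← hT, T.inner_map_map, hf (T x) x (T.norm_map x)]

lemma FT_eq_fourier {n : ℕ} (f : EuclideanSpace ℝ (Fin n) → ℂ) (ξ : EuclideanSpace ℝ (Fin n)) :
    FT n f ξ = FourierTransform.fourier f ((2 * π)⁻¹ • ξ) := by
  rw [Real.fourier_eq']
  unfold FT
  congr 1
  ext x
  rw [inner_smul_right, smul_eq_mul]
  congr 2
  have : (π : ℂ) ≠ 0 := by exact_mod_cast Real.pi_ne_zero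
  push_cast
  field_simp

lemma continuous_FT {n : ℕ} {f : EuclideanSpace ℝ (Fin n) → ℂ} (hf : ContDiff ℝ (⊤ : ℕ∞) f)
    (hc : HasCompactSupport f) : Continuous (FT n f) := by
  set φ := hc.toSchwartzMap hf
  have h : FT n f = fun ξ => (FourierTransform.fourier φ) ((2 * π)⁻¹ • ξ) := by
    ext ξ
    rw [FT_eq_fourier, SchwartzMap.fourier_coe]
    rfl
  rw [h]
  exact (SchwartzMap.continuous _).comp (continuous_const_smul _)

lemma norm_FT_le {n : ℕ} {f : EuclideanSpace ℝ (Fin n) → ℂ} (hf : ContDiff ℝ (⊤ : ℕ∞) f)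
    (hc : HasCompactSupport f) (N : ℝ) :
    ∃ C : ℝ, 0 ≤ C ∧ ∀ ξ, ‖FT n f ξ‖ ≤ C * (1 + ‖ξ‖) ^ (-N) := by
  set φ := hc.toSchwartzMap hf
  obtain ⟨k, hk⟩ := exists_nat_ge N
  set S := (Finset.Iic (k, 0)).sup (fun m => SchwartzMap.seminorm ℝ m.1 m.2)
    (FourierTransform.fourier φ) with hS
  have hS0 : 0 ≤ S := apply_nonneg _ _
  refine ⟨2 ^ k * S * (2 * π) ^ k, by positivity, fun ξ => ?_⟩
  have h := SchwartzMap.one_add_le_sup_seminorm_apply (𝕜 := ℝ) (m := (k, 0)) (k := k) (n := 0)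
    le_rfl le_rfl (FourierTransform.fourier φ) ((2 * π)⁻¹ • ξ)
  rw [norm_iteratedFDeriv_zero, SchwartzMap.fourier_coe] at h
  have h2 : FT n f ξ = FourierTransform.fourier (φ : _ → ℂ) ((2 * π)⁻¹ • ξ) := FT_eq_fourier f ξ
  rw [← h2, norm_smul, norm_inv, Real.norm_of_nonneg (by positivity : 0 ≤ 2 * π)] at h
  have hp : (1 : ℝ) ≤ 2 * π := by linarith [Real.pi_gt_three]
  have h3 : 1 + ‖ξ‖ ≤ 2 * π * (1 + (2 * π)⁻¹ * ‖ξ‖) := by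
    have : (2 * π) * ((2 * π)⁻¹ * ‖ξ‖) = ‖ξ‖ := by field_simp
    linarith
  have h4 : (1 + ‖ξ‖) ^ k * ‖FT n f ξ‖ ≤ 2 ^ k * S * (2 * π) ^ k := by
    calc (1 + ‖ξ‖) ^ k * ‖FT n f ξ‖ ≤ (2 * π * (1 + (2 * π)⁻¹ * ‖ξ‖)) ^ k * ‖FT n f ξ‖ := by gcongr
      _ = (2 * π) ^ k * ((1 + (2 * π)⁻¹ * ‖ξ‖) ^ k * ‖FT n f ξ‖) := by rw [mul_pow]; ring
      _ ≤ (2 * π) ^ k * (2 ^ k * S) := by gcongr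
      _ = _ := by ring
  have h1 : (1 : ℝ) ≤ 1 + ‖ξ‖ := by linarith [norm_nonneg ξ]
  calc ‖FT n f ξ‖ = (1 + ‖ξ‖) ^ (-(k : ℝ)) * ((1 + ‖ξ‖) ^ k * ‖FT n f ξ‖) := by
        rw [← Real.rpow_natCast, ← mul_assoc, ← Real.rpow_add (by positivity)]; simp
    _ ≤ (1 + ‖ξ‖) ^ (-N) * (2 ^ k * S * (2 * π) ^ k) := by
        gcongr
    _ = _ := by ring

lemma integrableOn_Ioi_of_decay {E : Type*} [NormedAddCommGroup E] {g : ℝ → E}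
    (hg : Continuous g) {C β : ℝ} (hβ : 1 < β)
    (h : ∀ ρ, 0 < ρ → ‖g ρ‖ ≤ C * (1 + ρ) ^ (-β)) : IntegrableOn g (Set.Ioi 0) := by
  have hj : Integrable (fun ρ : ℝ => (1 + ‖ρ‖) ^ (-β)) :=
    integrable_one_add_norm (by simpa using hβ)
  refine (hj.integrableOn.const_mul C).mono' hg.aestronglyMeasurable ?_
  refine (ae_restrict_mem measurableSet_Ioi).mono fun ρ hρ => ?_
  rw [Real.norm_of_nonneg (le_of_lt hρ)]
  exact h ρ hρ

lemma ofReal_iSup_norm_le {ι E : Type*} [Nonempty ι] [NormedAddCommGroup E] {g : ι → E}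
    {B : ℝ≥0∞} (h : ∀ i, ‖g i‖ₑ ≤ B) : ENNReal.ofReal (⨆ i, ‖g i‖) ≤ B := by
  rcases eq_or_ne B ⊤ with rfl | hB
  · exact le_top
  · refine ENNReal.ofReal_le_of_le_toReal (ciSup_le fun i => ?_)
    rw [← toReal_enorm]
    exact ENNReal.toReal_mono hB (h i)

lemma enorm_integral_bes_le {m : ℕ} {A A' : ℂ} {K : ℝ} (hK : 0 ≤ K)
    (hA : ∀ u > 0, ‖((u ^ (((m : ℝ) + 1) / 2) : ℝ) : ℂ) * bes m 0 u
      - A * Complex.exp (Complex.I * (u : ℂ)) - A' * Complex.exp (-Complex.I * (u : ℂ))‖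
        ≤ K * min 1 (1 / u))
    {a : ℝ} (ha : 0 < a) {F : ℝ → ℂ} (hF : Continuous F)
    (h1 : IntegrableOn (fun ρ => F ρ * ((ρ ^ (m + 1) : ℝ) : ℂ)) (Set.Ioi 0))
    (h2 : IntegrableOn (fun ρ => F ρ * ((ρ ^ (((m : ℝ) + 1) / 2) : ℝ) : ℂ)) (Set.Ioi 0))
    {r : ℝ} (hr : 0 < r) (t : Set.Icc (-1 : ℝ) 1) :
    ENNReal.ofReal (r ^ (((m : ℝ) + 1) / 2)) * ‖∫ ρ in Set.Ioi (0 : ℝ), bes m 0 (r * ρ) *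
        (Complex.exp (Complex.I * ((t * ρ ^ a : ℝ) : ℂ)) * F ρ * ((ρ ^ (m + 1) : ℝ) : ℂ))‖ₑ
      ≤ ‖A‖ₑ * maxOsc a 1 (Set.Ioi 0) (fun ρ => F ρ * ((ρ ^ (((m : ℝ) + 1) / 2) : ℝ) : ℂ)) r
        + ‖A'‖ₑ * maxOsc a 1 (Set.Ioi 0)
          (fun ρ => F ρ * ((ρ ^ (((m : ℝ) + 1) / 2) : ℝ) : ℂ)) (-r)
        + ENNReal.ofReal K * ∫⁻ ρ in Set.Ioi (0 : ℝ), ENNReal.ofReal (min 1 (1 / (r * ρ))) *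
          ‖F ρ * ((ρ ^ (((m : ℝ) + 1) / 2) : ℝ) : ℂ)‖ₑ := by
  set p : ℝ := ((m : ℝ) + 1) / 2 with hp
  set G : ℝ → ℂ := fun ρ => F ρ * ((ρ ^ p : ℝ) : ℂ) with hG
  have hb : Continuous (bes m 0) :=
    continuous_iff_continuousAt.2 fun u => (hasDerivAt_bes m 0 u).continuousAt
  have hpow : Continuous fun ρ : ℝ => ρ ^ a :=
    Real.continuous_rpow_const ha.le
  have hi1 : IntegrableOn (fun ρ : ℝ => bes m 0 (r * ρ) *
      (Complex.exp (Complex.I * ((t * ρ ^ a : ℝ) : ℂ)) * F ρ * ((ρ ^ (m + 1) : ℝ) : ℂ)))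
      (Set.Ioi 0) := by
    refine (h1.norm.const_mul π).mono' (Continuous.aestronglyMeasurable (by fun_prop)) ?_
    refine Filter.Eventually.of_forall fun ρ => ?_
    rw [norm_mul, mul_assoc, norm_mul (Complex.exp _), norm_cexp_I_mul, one_mul]
    gcongr
    exact norm_bes_le ..
  have hi2 : ∀ q : ℝ, IntegrableOn (fun ρ : ℝ =>
      Complex.exp (Complex.I * ((q * ρ + t * ρ ^ a : ℝ) : ℂ)) * G ρ) (Set.Ioi 0) := by
    intro q
    refine h2.norm.mono' ?_ ?_
    · exact (Continuous.aestronglyMeasurable (by fun_prop)).mul h2.aestronglyMeasurable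
    · refine Filter.Eventually.of_forall fun ρ => ?_
      rw [norm_mul, norm_cexp_I_mul, one_mul]
  have key : ((r ^ p : ℝ) : ℂ) * ∫ ρ in Set.Ioi (0 : ℝ), bes m 0 (r * ρ) *
        (Complex.exp (Complex.I * ((t * ρ ^ a : ℝ) : ℂ)) * F ρ * ((ρ ^ (m + 1) : ℝ) : ℂ))
      = A * osc a (Set.Ioi 0) G r t + A' * osc a (Set.Ioi 0) G (-r) t
        + ∫ ρ in Set.Ioi (0 : ℝ), (((r * ρ) ^ p : ℝ) * bes m 0 (r * ρ)
          - A * Complex.exp (Complex.I * ((r * ρ : ℝ) : ℂ))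
          - A' * Complex.exp (-Complex.I * ((r * ρ : ℝ) : ℂ)))
            * (Complex.exp (Complex.I * ((t * ρ ^ a : ℝ) : ℂ)) * G ρ) := by
    have e : ∫ ρ in Set.Ioi (0 : ℝ), (((r * ρ) ^ p : ℝ) * bes m 0 (r * ρ)
          - A * Complex.exp (Complex.I * ((r * ρ : ℝ) : ℂ))
          - A' * Complex.exp (-Complex.I * ((r * ρ : ℝ) : ℂ)))
            * (Complex.exp (Complex.I * ((t * ρ ^ a : ℝ) : ℂ)) * G ρ)
        = ∫ ρ in Set.Ioi (0 : ℝ), (((r ^ p : ℝ) : ℂ) * (bes m 0 (r * ρ) *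
        (Complex.exp (Complex.I * ((t * ρ ^ a : ℝ) : ℂ)) * F ρ * ((ρ ^ (m + 1) : ℝ) : ℂ)))
          - A * (Complex.exp (Complex.I * ((r * ρ + t * ρ ^ a : ℝ) : ℂ)) * G ρ)
          - A' * (Complex.exp (Complex.I * ((-r * ρ + t * ρ ^ a : ℝ) : ℂ)) * G ρ)) := by
      refine setIntegral_congr_fun measurableSet_Ioi fun ρ hρ => ?_
      have hρ : 0 < ρ := hρ
      have e1 : ρ ^ (m + 1) = ρ ^ p * ρ ^ p := by
        rw [← Real.rpow_add hρ, ← Real.rpow_natCast]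
        congr 1
        push_cast
        rw [hp]
        ring
      have e2 : Complex.exp (Complex.I * ((r * ρ + t * ρ ^ a : ℝ) : ℂ))
          = Complex.exp (Complex.I * ((r * ρ : ℝ) : ℂ))
            * Complex.exp (Complex.I * ((t * ρ ^ a : ℝ) : ℂ)) := by
        rw [← Complex.exp_add]
        congr 1
        push_cast
        ring
      have e3 : Complex.exp (Complex.I * ((-r * ρ + t * ρ ^ a : ℝ) : ℂ))
          = Complex.exp (-Complex.I * ((r * ρ : ℝ) : ℂ))
            * Complex.exp (Complex.I * ((t * ρ ^ a : ℝ) : ℂ)) := by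
        rw [← Complex.exp_add]
        congr 1
        push_cast
        ring
      simp only [hG]
      rw [e1, e2, e3, Real.mul_rpow hr.le hρ.le]
      push_cast
      ring
    rw [e, integral_sub ?_ ((hi2 (-r)).const_mul _),
      integral_sub (hi1.const_mul _) ((hi2 r).const_mul _), integral_const_mul, integral_const_mul,
      integral_const_mul]
    · unfold osc
      ring
    · exact (hi1.const_mul _).sub ((hi2 r).const_mul _)
  have hle : ENNReal.ofReal (r ^ p) = ‖((r ^ p : ℝ) : ℂ)‖ₑ := by
    rw [← ofReal_norm, Complex.norm_real, Real.norm_of_nonneg (by positivity)]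
  rw [hle, ← enorm_mul, key]
  refine (enorm_add_le _ _).trans (add_le_add ((enorm_add_le _ _).trans (add_le_add ?_ ?_)) ?_)
  · rw [enorm_mul]
    exact mul_le_mul' le_rfl (le_iSup (fun t : Set.Icc (-1 : ℝ) 1 => ‖osc a (Set.Ioi 0) G r t‖ₑ) t)
  · rw [enorm_mul]
    exact mul_le_mul' le_rfl
      (le_iSup (fun t : Set.Icc (-1 : ℝ) 1 => ‖osc a (Set.Ioi 0) G (-r) t‖ₑ) t)
  · refine (enorm_integral_le_lintegral_enorm _).trans ?_
    rw [← lintegral_const_mul' _ _ ENNReal.ofReal_ne_top]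
    refine setLIntegral_mono' measurableSet_Ioi fun ρ hρ => ?_
    have hρ : 0 < ρ := hρ
    rw [enorm_mul, enorm_mul, ← mul_assoc (ENNReal.ofReal K), ← ENNReal.ofReal_mul hK]
    refine mul_le_mul' ?_ ?_
    · rw [← ofReal_norm]
      exact ENNReal.ofReal_le_ofReal (hA _ (by positivity))
    · rw [← ofReal_norm (Complex.exp _), norm_cexp_I_mul, ENNReal.ofReal_one, one_mul]

lemma lintegral_bes_maximal (m : ℕ) {a s : ℝ} (ha : 0 < a) (ha1 : a ≠ 1) (hs : a / 4 < s) :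
    ∃ C : ℝ, 0 < C ∧ ∀ F : ℝ → ℂ, Continuous F →
      IntegrableOn (fun ρ => F ρ * ((ρ ^ (m + 1) : ℝ) : ℂ)) (Set.Ioi 0) →
      IntegrableOn (fun ρ => F ρ * ((ρ ^ (((m : ℝ) + 1) / 2) : ℝ) : ℂ)) (Set.Ioi 0) →
      ∫⁻ r in Set.Ioi (0 : ℝ), (ENNReal.ofReal (r ^ (((m : ℝ) + 1) / 2)) *
        ⨆ t : Set.Icc (-1 : ℝ) 1, ‖∫ ρ in Set.Ioi (0 : ℝ), bes m 0 (r * ρ) *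
        (Complex.exp (Complex.I * ((t * ρ ^ a : ℝ) : ℂ)) * F ρ * ((ρ ^ (m + 1) : ℝ) : ℂ))‖ₑ) ^ 2
      ≤ ENNReal.ofReal C * ∫⁻ ρ in Set.Ioi (0 : ℝ), ENNReal.ofReal ((1 + ρ ^ 2) ^ s) *
          ‖F ρ * ((ρ ^ (((m : ℝ) + 1) / 2) : ℝ) : ℂ)‖ₑ ^ 2 := by
  obtain ⟨A, A', K, hK, hA⟩ := exists_bes_asymptotics m
  obtain ⟨C, hC, hmax⟩ := lintegral_maxOsc_Ioi ha ha1 hs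
  refine ⟨4 * ‖A‖ ^ 2 * C + 4 * ‖A'‖ ^ 2 * C + 2 * K ^ 2 * 16 + 1, by positivity,
    fun F hF h1 h2 => ?_⟩
  set p : ℝ := ((m : ℝ) + 1) / 2 with hp
  have hp0 : 0 < p := by positivity
  set G : ℝ → ℂ := fun ρ => F ρ * ((ρ ^ p : ℝ) : ℂ) with hG
  have hGc : Continuous G :=
    hF.mul (Complex.continuous_ofReal.comp (Real.continuous_rpow_const hp0.le))
  set J := ∫⁻ ρ in Set.Ioi (0 : ℝ), ENNReal.ofReal ((1 + ρ ^ 2) ^ s) * ‖G ρ‖ₑ ^ 2 with hJ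
  have hM := measurable_maxOsc a 1 h2
  have hX : ∫⁻ r in Set.Ioi (0 : ℝ), maxOsc a 1 (Set.Ioi 0) G r ^ 2 ≤ ENNReal.ofReal C * J :=
    (setLIntegral_le_lintegral _ _).trans (hmax G hGc h2)
  have hY : ∫⁻ r in Set.Ioi (0 : ℝ), maxOsc a 1 (Set.Ioi 0) G (-r) ^ 2 ≤ ENNReal.ofReal C * J := by
    refine (setLIntegral_le_lintegral _ _).trans ?_
    rw [lintegral_neg_eq_self (fun r => maxOsc a 1 (Set.Ioi 0) G r ^ 2)]
    exact hmax G hGc h2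
  have hZ : ∫⁻ r in Set.Ioi (0 : ℝ), (∫⁻ ρ in Set.Ioi (0 : ℝ),
      ENNReal.ofReal (min 1 (1 / (r * ρ))) * ‖G ρ‖ₑ) ^ 2 ≤ 16 * J := by
    refine (lintegral_hardy_le hGc.enorm.measurable).trans (mul_le_mul' le_rfl ?_)
    refine lintegral_mono fun ρ => le_mul_of_one_le_left zero_le ?_
    rw [ENNReal.one_le_ofReal]
    exact Real.one_le_rpow (by nlinarith [sq_nonneg ρ]) (by linarith)
  have hle : ∀ r ∈ Set.Ioi (0 : ℝ), (ENNReal.ofReal (r ^ p) *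
        ⨆ t : Set.Icc (-1 : ℝ) 1, ‖∫ ρ in Set.Ioi (0 : ℝ), bes m 0 (r * ρ) *
        (Complex.exp (Complex.I * ((t * ρ ^ a : ℝ) : ℂ)) * F ρ * ((ρ ^ (m + 1) : ℝ) : ℂ))‖ₑ) ^ 2
      ≤ 4 * ‖A‖ₑ ^ 2 * maxOsc a 1 (Set.Ioi 0) G r ^ 2
        + 4 * ‖A'‖ₑ ^ 2 * maxOsc a 1 (Set.Ioi 0) G (-r) ^ 2
        + 2 * ENNReal.ofReal K ^ 2 * (∫⁻ ρ in Set.Ioi (0 : ℝ),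
          ENNReal.ofReal (min 1 (1 / (r * ρ))) * ‖G ρ‖ₑ) ^ 2 := by
    intro r hr
    rw [ENNReal.mul_iSup]
    refine (pow_le_pow_left' (iSup_le fun t => enorm_integral_bes_le hK hA ha hF h1 h2 hr t) 2).trans
      ?_
    refine (ennreal_add_sq_le _ _).trans ?_
    refine (mul_le_mul' le_rfl (add_le_add (ennreal_add_sq_le _ _) le_rfl)).trans (le_of_eq ?_)
    ring
  refine (setLIntegral_mono' measurableSet_Ioi hle).trans ?_
  have m1 : Measurable fun r => 4 * ‖A‖ₑ ^ 2 * maxOsc a 1 (Set.Ioi 0) G r ^ 2 :=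
    (hM.pow_const 2).const_mul _
  have m2 : Measurable fun r => 4 * ‖A'‖ₑ ^ 2 * maxOsc a 1 (Set.Ioi 0) G (-r) ^ 2 :=
    ((hM.comp measurable_neg).pow_const 2).const_mul _
  have n0 : ∀ z : ℂ, (4 : ℝ≥0∞) * ‖z‖ₑ ^ 2 ≠ ⊤ := fun z =>
    ENNReal.mul_ne_top (by simp) (by simp)
  have m12 : Measurable fun r => 4 * ‖A‖ₑ ^ 2 * maxOsc a 1 (Set.Ioi 0) G r ^ 2
      + 4 * ‖A'‖ₑ ^ 2 * maxOsc a 1 (Set.Ioi 0) G (-r) ^ 2 := m1.add m2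
  rw [lintegral_add_left m12, lintegral_add_left m1, lintegral_const_mul' _ _ (n0 A),
    lintegral_const_mul' _ _ (n0 A'), lintegral_const_mul' _ _
      (ENNReal.mul_ne_top (by simp) (by simp))]
  have hc : ENNReal.ofReal (4 * ‖A‖ ^ 2 * C + 4 * ‖A'‖ ^ 2 * C + 2 * K ^ 2 * 16 + 1)
      = 4 * ‖A‖ₑ ^ 2 * ENNReal.ofReal C + 4 * ‖A'‖ₑ ^ 2 * ENNReal.ofReal C
        + 2 * ENNReal.ofReal K ^ 2 * 16 + 1 := by
    rw [ENNReal.ofReal_add (by positivity) (by positivity),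
      ENNReal.ofReal_add (by positivity) (by positivity),
      ENNReal.ofReal_add (by positivity) (by positivity)]
    simp only [← ofReal_norm]
    rw [ENNReal.ofReal_mul (by positivity), ENNReal.ofReal_mul (by positivity),
      ENNReal.ofReal_mul (by positivity), ENNReal.ofReal_mul (by positivity),
      ENNReal.ofReal_mul (by positivity), ENNReal.ofReal_mul (by positivity),
      ENNReal.ofReal_pow (norm_nonneg _), ENNReal.ofReal_pow (norm_nonneg _),
      ENNReal.ofReal_pow hK]
    simp
  rw [hc]
  calc _ ≤ 4 * ‖A‖ₑ ^ 2 * (ENNReal.ofReal C * J) + 4 * ‖A'‖ₑ ^ 2 * (ENNReal.ofReal C * J)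
        + 2 * ENNReal.ofReal K ^ 2 * (16 * J) := by
        exact add_le_add (add_le_add (mul_le_mul' le_rfl hX) (mul_le_mul' le_rfl hY))
          (mul_le_mul' le_rfl hZ)
    _ ≤ 4 * ‖A‖ₑ ^ 2 * (ENNReal.ofReal C * J) + 4 * ‖A'‖ₑ ^ 2 * (ENNReal.ofReal C * J)
        + 2 * ENNReal.ofReal K ^ 2 * (16 * J) + J := le_self_add
    _ = _ := by ring

lemma exists_FT_profile (m : ℕ) {f : EuclideanSpace ℝ (Fin (m + 2)) → ℂ}
    (hf : ContDiff ℝ (⊤ : ℕ∞) f) (hc : HasCompactSupport f)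
    (hr : ∀ x y : EuclideanSpace ℝ (Fin (m + 2)), ‖x‖ = ‖y‖ → f x = f y) (N : ℝ) :
    ∃ F : ℝ → ℂ, Continuous F ∧ (∀ ξ, FT (m + 2) f ξ = F ‖ξ‖) ∧
      ∃ C : ℝ, 0 ≤ C ∧ ∀ ρ, 0 ≤ ρ → ‖F ρ‖ ≤ C * (1 + ρ) ^ (-N) := by
  obtain ⟨C, hC0, hC⟩ := norm_FT_le hf hc N
  refine ⟨fun ρ => FT (m + 2) f (ρ • EuclideanSpace.single 0 1),
    (continuous_FT hf hc).comp (by fun_prop), fun ξ => FT_radial hr (by simp [norm_smul]),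
    C, hC0, fun ρ hρ => ?_⟩
  refine (hC _).trans (le_of_eq ?_)
  simp [norm_smul, abs_of_nonneg hρ]

lemma Sosc_radial_eq {m : ℕ} {a c C : ℝ} (ha : 0 < a)
    (hc : ∀ h : ℝ → ℂ, Continuous h → ∀ C : ℝ,
      (∀ ρ, 0 ≤ ρ → ‖h ρ‖ ≤ C * (1 + ρ) ^ (-((m : ℝ) + 4))) →
      ∀ x : EuclideanSpace ℝ (Fin (m + 2)),
        ∫ ξ : EuclideanSpace ℝ (Fin (m + 2)), Complex.exp (Complex.I * ((⟪x, ξ⟫_ℝ : ℝ) : ℂ)) * h ‖ξ‖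
          = (c : ℂ) * ∫ ρ in Set.Ioi (0 : ℝ),
            bes m 0 (‖x‖ * ρ) * (h ρ * ((ρ ^ (m + 1) : ℝ) : ℂ)))
    {f : EuclideanSpace ℝ (Fin (m + 2)) → ℂ} {F : ℝ → ℂ} (hF : Continuous F)
    (hFf : ∀ ξ, FT (m + 2) f ξ = F ‖ξ‖)
    (hC : ∀ ρ, 0 ≤ ρ → ‖F ρ‖ ≤ C * (1 + ρ) ^ (-((m : ℝ) + 4)))
    (x : EuclideanSpace ℝ (Fin (m + 2))) (t : ℝ) :
    Sosc (m + 2) a f x t = (((2 * π) ^ (m + 2) : ℝ) : ℂ)⁻¹ * ((c : ℂ) *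
      ∫ ρ in Set.Ioi (0 : ℝ), bes m 0 (‖x‖ * ρ) *
        (Complex.exp (Complex.I * ((t * ρ ^ a : ℝ) : ℂ)) * F ρ * ((ρ ^ (m + 1) : ℝ) : ℂ))) := by
  have hpow : Continuous fun ρ : ℝ => ρ ^ a := Real.continuous_rpow_const ha.le
  rw [← hc (fun ρ => Complex.exp (Complex.I * ((t * ρ ^ a : ℝ) : ℂ)) * F ρ) (by fun_prop) C
    (fun ρ hρ => by rw [norm_mul, norm_cexp_I_mul, one_mul]; exact hC ρ hρ) x]
  unfold Sosc
  congr 2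
  ext ξ
  rw [hFf, ← mul_assoc, ← Complex.exp_add]
  congr 2
  push_cast
  ring

lemma weighted_decay {E : Type*} [NormedAddCommGroup E] {v : E} {ρ q w C N β : ℝ} (hρ : 0 < ρ)
    (hw : ‖w‖ ≤ (1 + ρ) ^ q) (hC : 0 ≤ C) (hv : ‖v‖ ≤ C * (1 + ρ) ^ (-N))
    (hβ : β ≤ N - q) : ‖v‖ * ‖w‖ ≤ C * (1 + ρ) ^ (-β) := by
  calc ‖v‖ * ‖w‖ ≤ C * (1 + ρ) ^ (-N) * (1 + ρ) ^ q := by gcongr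
    _ = C * (1 + ρ) ^ (-N + q) := by rw [mul_assoc, ← Real.rpow_add (by positivity)]
    _ ≤ C * (1 + ρ) ^ (-β) := by
        gcongr
        · linarith
        · linarith

lemma integral_iSup_Sosc_sq_le (m : ℕ) {a s : ℝ} (ha : 0 < a) (ha1 : a ≠ 1) (hs : a / 4 < s) :
    ∃ C > 0, ∀ f : EuclideanSpace ℝ (Fin (m + 2)) → ℂ,
      ContDiff ℝ (⊤ : ℕ∞) f → HasCompactSupport f →
      (∀ x y : EuclideanSpace ℝ (Fin (m + 2)), ‖x‖ = ‖y‖ → f x = f y) →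
      ∫ x, (⨆ t : Set.Ioo (-1 : ℝ) 1, ‖Sosc (m + 2) a f x t‖) ^ 2
        ≤ C * ∫ ξ, (1 + ‖ξ‖ ^ 2) ^ s * ‖FT (m + 2) f ξ‖ ^ 2 := by
  obtain ⟨c, hc0, hc⟩ := integral_exp_inner_radial m
  obtain ⟨D, hD, hmax⟩ := lintegral_bes_maximal m ha ha1 hs
  obtain ⟨b, hb⟩ : ∃ b : ℝ, b = ((2 * π) ^ (m + 2))⁻¹ * c := ⟨_, rfl⟩
  have hb0 : 0 ≤ b := by rw [hb]; positivity
  have hbc : (b : ℂ) = (((2 * π) ^ (m + 2) : ℝ) : ℂ)⁻¹ * (c : ℂ) := by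
    rw [hb]
    push_cast
    rfl
  refine ⟨b ^ 2 * D + 1, by positivity, fun f hf hfc hfr => ?_⟩
  have hs0 : 0 < s := by linarith
  set N : ℝ := (m : ℝ) + 4 + s with hN
  obtain ⟨F, hF, hFf, B, hB0, hB⟩ := exists_FT_profile m hf hfc hfr N
  have hB' : ∀ ρ, 0 ≤ ρ → ‖F ρ‖ ≤ B * (1 + ρ) ^ (-((m : ℝ) + 4)) := fun ρ hρ => by
    refine (hB ρ hρ).trans ?_
    gcongr
    · linarith
    · linarith
  have hS := Sosc_radial_eq ha hc hF hFf hB'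
  set p : ℝ := ((m : ℝ) + 1) / 2 with hp
  have hp0 : 0 < p := by positivity
  have h1 : IntegrableOn (fun ρ => F ρ * ((ρ ^ (m + 1) : ℝ) : ℂ)) (Set.Ioi 0) := by
    refine integrableOn_Ioi_of_decay (by fun_prop) (C := B) one_lt_two fun ρ hρ => ?_
    rw [norm_mul, Complex.norm_real]
    refine weighted_decay hρ (q := (m : ℝ) + 1) ?_ hB0 (hB ρ hρ.le) (by linarith)
    rw [Real.norm_of_nonneg (by positivity), ← Real.rpow_natCast]
    push_cast
    gcongr
    linarith
  have h2 : IntegrableOn (fun ρ => F ρ * ((ρ ^ p : ℝ) : ℂ)) (Set.Ioi 0) := by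
    refine integrableOn_Ioi_of_decay
      (hF.mul (Complex.continuous_ofReal.comp (Real.continuous_rpow_const hp0.le)))
      (C := B) one_lt_two fun ρ hρ => ?_
    rw [norm_mul, Complex.norm_real]
    refine weighted_decay hρ (q := p) ?_ hB0 (hB ρ hρ.le) (by linarith)
    rw [Real.norm_of_nonneg (by positivity)]
    gcongr
    linarith
  have h3 : IntegrableOn (fun ρ : ℝ => ρ ^ (m + 1) * ((1 + ρ ^ 2) ^ s * ‖F ρ‖ ^ 2))
      (Set.Ioi 0) := by
    have hcs : Continuous fun ρ : ℝ => (1 + ρ ^ 2) ^ s :=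
      Continuous.rpow_const (by fun_prop) fun ρ => Or.inr hs0.le
    refine integrableOn_Ioi_of_decay (by fun_prop) (C := B ^ 2) one_lt_two fun ρ hρ => ?_
    have e : ‖ρ ^ (m + 1) * ((1 + ρ ^ 2) ^ s * ‖F ρ‖ ^ 2)‖
        = ‖‖F ρ‖ ^ 2‖ * ‖ρ ^ (m + 1) * (1 + ρ ^ 2) ^ s‖ := by
      rw [← norm_mul]
      congr 1
      ring
    rw [e]
    refine weighted_decay hρ (q := (m : ℝ) + 1 + 2 * s) (N := 2 * N) ?_
      (by positivity) ?_ (by linarith)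
    · rw [Real.norm_of_nonneg (by positivity), Real.rpow_add (by positivity),
        Real.rpow_mul (by positivity), ← Real.rpow_natCast]
      push_cast
      gcongr
      · linarith
      · rw [Real.rpow_two]
        nlinarith
    · rw [norm_pow, norm_norm]
      refine (pow_le_pow_left₀ (norm_nonneg _) (hB ρ hρ.le) 2).trans (le_of_eq ?_)
      rw [mul_pow, ← Real.rpow_natCast ((1 + ρ) ^ (-N)), ← Real.rpow_mul (by positivity)]
      congr 2
      push_cast
      ring
  set Q : ℝ → ℝ → ℂ := fun r t => ∫ ρ in Set.Ioi (0 : ℝ), bes m 0 (r * ρ) *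
        (Complex.exp (Complex.I * ((t * ρ ^ a : ℝ) : ℂ)) * F ρ * ((ρ ^ (m + 1) : ℝ) : ℂ)) with hQ
  set M : ℝ → ℝ := fun r => ⨆ t : Set.Ioo (-1 : ℝ) 1, ‖(b : ℂ) * Q r t‖ with hM
  have hMx : ∀ x : EuclideanSpace ℝ (Fin (m + 2)),
      (⨆ t : Set.Ioo (-1 : ℝ) 1, ‖Sosc (m + 2) a f x t‖) = M ‖x‖ := by
    intro x
    simp only [hM]
    congr 1
    ext t
    rw [hS, ← mul_assoc, ← hbc]
  have hne : Nonempty (Set.Ioo (-1 : ℝ) 1) := ⟨0, by norm_num⟩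
  have hI1 : ∫ r in Set.Ioi (0 : ℝ), r ^ (m + 1) * M r ^ 2
      ≤ b ^ 2 * D * ∫ ρ in Set.Ioi (0 : ℝ), ρ ^ (m + 1) * ((1 + ρ ^ 2) ^ s * ‖F ρ‖ ^ 2) := by
    have hpos : 0 ≤ ∫ ρ in Set.Ioi (0 : ℝ), ρ ^ (m + 1) * ((1 + ρ ^ 2) ^ s * ‖F ρ‖ ^ 2) :=
      setIntegral_nonneg measurableSet_Ioi fun ρ hρ => by
        have hρ : 0 < ρ := hρ
        positivity
    rw [← ENNReal.ofReal_le_ofReal_iff (by positivity)]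
    have hpp : ∀ ρ : ℝ, 0 < ρ → ρ ^ (m + 1) = ρ ^ p * ρ ^ p := fun ρ hρ => by
      rw [← Real.rpow_add hρ, ← Real.rpow_natCast]
      congr 1
      push_cast
      rw [hp]
      ring
    calc ENNReal.ofReal (∫ r in Set.Ioi (0 : ℝ), r ^ (m + 1) * M r ^ 2)
        ≤ ‖∫ r in Set.Ioi (0 : ℝ), r ^ (m + 1) * M r ^ 2‖ₑ := by
          rw [← ofReal_norm]
          exact ENNReal.ofReal_le_ofReal (Real.le_norm_self _)
      _ ≤ ∫⁻ r in Set.Ioi (0 : ℝ), ‖r ^ (m + 1) * M r ^ 2‖ₑ := enorm_integral_le_lintegral_enorm _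
      _ ≤ ∫⁻ r in Set.Ioi (0 : ℝ), ENNReal.ofReal b ^ 2 * (ENNReal.ofReal (r ^ p) *
            ⨆ t : Set.Icc (-1 : ℝ) 1, ‖Q r t‖ₑ) ^ 2 := by
          refine setLIntegral_mono' measurableSet_Ioi fun r hr => ?_
          have hr : 0 < r := hr
          have hM0 : 0 ≤ M r := Real.iSup_nonneg fun t => norm_nonneg _
          have hMle : ENNReal.ofReal (M r)
              ≤ ENNReal.ofReal b * ⨆ t : Set.Icc (-1 : ℝ) 1, ‖Q r t‖ₑ := by
            refine ofReal_iSup_norm_le fun t => ?_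
            rw [enorm_mul, ← ofReal_norm, Complex.norm_real, Real.norm_of_nonneg hb0]
            exact mul_le_mul' le_rfl (le_iSup (fun t : Set.Icc (-1 : ℝ) 1 => ‖Q r t‖ₑ)
              ⟨t, Set.Ioo_subset_Icc_self t.2⟩)
          rw [← ofReal_norm, Real.norm_of_nonneg (by positivity), hpp r hr,
            show r ^ p * r ^ p * M r ^ 2 = (r ^ p * M r) ^ 2 by ring,
            ENNReal.ofReal_pow (by positivity), ENNReal.ofReal_mul (by positivity), ← mul_pow]
          refine pow_le_pow_left' ?_ 2
          rw [mul_left_comm]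
          exact mul_le_mul' le_rfl hMle
      _ ≤ ENNReal.ofReal b ^ 2 * (ENNReal.ofReal D * ∫⁻ ρ in Set.Ioi (0 : ℝ),
            ENNReal.ofReal ((1 + ρ ^ 2) ^ s) * ‖F ρ * ((ρ ^ p : ℝ) : ℂ)‖ₑ ^ 2) := by
          rw [lintegral_const_mul' _ _ (by simp)]
          exact mul_le_mul' le_rfl (hmax F hF h1 h2)
      _ = ENNReal.ofReal (b ^ 2 * D *
            ∫ ρ in Set.Ioi (0 : ℝ), ρ ^ (m + 1) * ((1 + ρ ^ 2) ^ s * ‖F ρ‖ ^ 2)) := by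
          rw [ENNReal.ofReal_mul (by positivity), ENNReal.ofReal_mul (by positivity),
            ENNReal.ofReal_pow hb0, ofReal_integral_eq_lintegral_ofReal h3, mul_assoc]
          · congr 2
            refine setLIntegral_congr_fun measurableSet_Ioi fun ρ hρ => ?_
            have hρ : 0 < ρ := hρ
            rw [← ofReal_norm, norm_mul, Complex.norm_real, Real.norm_of_nonneg (by positivity),
              ← ENNReal.ofReal_pow (by positivity), ← ENNReal.ofReal_mul (by positivity), hpp ρ hρ]
            congr 1
            ring
          · refine (ae_restrict_mem measurableSet_Ioi).mono fun ρ hρ => ?_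
            have hρ : 0 < ρ := hρ
            simp only [Pi.zero_apply]
            positivity
  simp_rw [hMx, hFf]
  rw [integral_fun_norm_addHaar volume (fun r => M r ^ 2),
    integral_fun_norm_addHaar volume (fun r => (1 + r ^ 2) ^ s * ‖F r‖ ^ 2),
    finrank_euclideanSpace_fin]
  simp only [nsmul_eq_mul, smul_eq_mul, show m + 2 - 1 = m + 1 from rfl]
  have hpos : 0 ≤ ∫ ρ in Set.Ioi (0 : ℝ), ρ ^ (m + 1) * ((1 + ρ ^ 2) ^ s * ‖F ρ‖ ^ 2) :=
    setIntegral_nonneg measurableSet_Ioi fun ρ hρ => by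
      have hρ : 0 < ρ := hρ
      positivity
  set V := (volume : Measure (EuclideanSpace ℝ (Fin (m + 2)))).real (Metric.ball 0 1)
  have hV : 0 ≤ V := measureReal_nonneg
  set R := ∫ ρ in Set.Ioi (0 : ℝ), ρ ^ (m + 1) * ((1 + ρ ^ 2) ^ s * ‖F ρ‖ ^ 2)
  calc _ ≤ ((m + 2 : ℕ) : ℝ) * (V * (b ^ 2 * D * R)) := by gcongr
    _ ≤ ((m + 2 : ℕ) : ℝ) * (V * ((b ^ 2 * D + 1) * R)) := by gcongr; linarith
    _ = _ := by ring

theorem stmt0 (a : ℝ) (ha : 0 < a) (ha1 : a ≠ 1) (n : ℕ) (hn : 2 ≤ n)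
    (s : ℝ) (hs : a / 4 < s) :
    ∃ C > 0, ∀ f : EuclideanSpace ℝ (Fin n) → ℂ,
      ContDiff ℝ (⊤ : ℕ∞) f → HasCompactSupport f → 0 ∉ tsupport f →
      (∀ x y : EuclideanSpace ℝ (Fin n), ‖x‖ = ‖y‖ → f x = f y) →
      (∫ x, (⨆ t : Set.Ioo (-1 : ℝ) 1, ‖Sosc n a f x t‖) ^ 2) ^ (1/2 : ℝ)
        ≤ C * (∫ ξ, (1 + ‖ξ‖ ^ 2) ^ s * ‖FT n f ξ‖ ^ 2) ^ (1/2 : ℝ) := by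
  obtain ⟨m, rfl⟩ := Nat.exists_eq_add_of_le' hn
  obtain ⟨C, hC, h⟩ := integral_iSup_Sosc_sq_le m ha ha1 hs
  refine ⟨C ^ (1/2 : ℝ), by positivity, fun f hf hfc _ hfr => ?_⟩
  rw [← Real.mul_rpow hC.le (integral_nonneg fun ξ => by positivity)]
  exact Real.rpow_le_rpow (integral_nonneg fun x => by positivity) (h f hf hfc hfr) (by norm_num)
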